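/- There is a sequence of cut-free Lε-proofs of end-sequents S_i such that: (1) the size of S_i is polynomial in i; (2) each S_i is the epsilon translation of a first-order sequent S'_i containing weak quantifiers only; (3) the size of these cut-free Lε-proofs is polynomially bounded in i; and (4) there is no elementary function of i bounding the size of the smallest cut-free LK⁺-proofs or cut-free LK⁺⁺-proofs of S'_i. Hence cut-free Lε-proofs give a non-elementary speed-up even over cut-free LK⁺- and LK⁺⁺-proofs. -/

import Mathlib

namespace EpsCalc

/-! ## Syntax: terms and formulas of first-order logic extended by epsilon terms.
We use a locally nameless representation: `bvar` are de Bruijn indices for bound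
variables (bound by `all`, `ex`, or `eps`), `fvar` are named free variables. -/

mutual
inductive Tm : Type where
  | bvar : ℕ → Tm
  | fvar : ℕ → Tm
  | func : ℕ → Tms → Tm
  | eps  : Fm → Tm          -- the epsilon term ε_x A(x)

inductive Tms : Type where
  | nil  : Tms
  | cons : Tm → Tms → Tms

inductive Fm : Type where
  | atom : ℕ → Tms → Fm
  | and  : Fm → Fm → Fm
  | or   : Fm → Fm → Fm
  | imp  : Fm → Fm → Fm
  | not  : Fm → Fm
  | all  : Fm → Fm          -- ∀ binding de Bruijn index 0
  | ex   : Fm → Fm          -- ∃ binding de Bruijn index 0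
end

/-! lifting of bound variables (shift indices ≥ k by one) -/
mutual
def liftT (k : ℕ) : Tm → Tm
  | .bvar n => if n < k then .bvar n else .bvar (n+1)
  | .fvar a => .fvar a
  | .func f ts => .func f (liftTs k ts)
  | .eps A => .eps (liftF (k+1) A)
def liftTs (k : ℕ) : Tms → Tms
  | .nil => .nil
  | .cons t ts => .cons (liftT k t) (liftTs k ts)
def liftF (k : ℕ) : Fm → Fm
  | .atom p ts => .atom p (liftTs k ts)
  | .and A B => .and (liftF k A) (liftF k B)
  | .or A B => .or (liftF k A) (liftF k B)
  | .imp A B => .imp (liftF k A) (liftF k B)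
  | .not A => .not (liftF k A)
  | .all A => .all (liftF (k+1) A)
  | .ex A => .ex (liftF (k+1) A)
end

/-! substitution of a term for the bound variable k -/
mutual
def subT (k : ℕ) (u : Tm) : Tm → Tm
  | .bvar n => if n = k then u else if n < k then .bvar n else .bvar (n-1)
  | .fvar a => .fvar a
  | .func f ts => .func f (subTs k u ts)
  | .eps A => .eps (subF (k+1) (liftT 0 u) A)
def subTs (k : ℕ) (u : Tm) : Tms → Tms
  | .nil => .nil
  | .cons t ts => .cons (subT k u t) (subTs k u ts)
def subF (k : ℕ) (u : Tm) : Fm → Fm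
  | .atom p ts => .atom p (subTs k u ts)
  | .and A B => .and (subF k u A) (subF k u B)
  | .or A B => .or (subF k u A) (subF k u B)
  | .imp A B => .imp (subF k u A) (subF k u B)
  | .not A => .not (subF k u A)
  | .all A => .all (subF (k+1) (liftT 0 u) A)
  | .ex A => .ex (subF (k+1) (liftT 0 u) A)
end

/-- instantiate the outermost bound variable of `A` with the term `t`:  A(t) -/
def inst0 (A : Fm) (t : Tm) : Fm := subF 0 t A

/-! substitution of a term for a *free* variable -/
mutual
def sfvT (a : ℕ) (u : Tm) : Tm → Tm
  | .bvar n => .bvar n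
  | .fvar b => if b = a then u else .fvar b
  | .func f ts => .func f (sfvTs a u ts)
  | .eps A => .eps (sfvF a (liftT 0 u) A)
def sfvTs (a : ℕ) (u : Tm) : Tms → Tms
  | .nil => .nil
  | .cons t ts => .cons (sfvT a u t) (sfvTs a u ts)
def sfvF (a : ℕ) (u : Tm) : Fm → Fm
  | .atom p ts => .atom p (sfvTs a u ts)
  | .and A B => .and (sfvF a u A) (sfvF a u B)
  | .or A B => .or (sfvF a u A) (sfvF a u B)
  | .imp A B => .imp (sfvF a u A) (sfvF a u B)
  | .not A => .not (sfvF a u A)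
  | .all A => .all (sfvF a (liftT 0 u) A)
  | .ex A => .ex (sfvF a (liftT 0 u) A)
end

/-! abstraction of a free variable into a bound variable (for universal closure) -/
mutual
def abT (a k : ℕ) : Tm → Tm
  | .bvar n => .bvar n
  | .fvar b => if b = a then .bvar k else .fvar b
  | .func f ts => .func f (abTs a k ts)
  | .eps A => .eps (abF a (k+1) A)
def abTs (a k : ℕ) : Tms → Tms
  | .nil => .nil
  | .cons t ts => .cons (abT a k t) (abTs a k ts)
def abF (a k : ℕ) : Fm → Fm
  | .atom p ts => .atom p (abTs a k ts)
  | .and A B => .and (abF a k A) (abF a k B)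
  | .or A B => .or (abF a k A) (abF a k B)
  | .imp A B => .imp (abF a k A) (abF a k B)
  | .not A => .not (abF a k A)
  | .all A => .all (abF a (k+1) A)
  | .ex A => .ex (abF a (k+1) A)
end

/-! free variables -/
mutual
def fvT : Tm → List ℕ
  | .bvar _ => []
  | .fvar a => [a]
  | .func _ ts => fvTs ts
  | .eps A => fvF A
def fvTs : Tms → List ℕ
  | .nil => []
  | .cons t ts => fvT t ++ fvTs ts
def fvF : Fm → List ℕ
  | .atom _ ts => fvTs ts
  | .and A B => fvF A ++ fvF B
  | .or A B => fvF A ++ fvF B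
  | .imp A B => fvF A ++ fvF B
  | .not A => fvF A
  | .all A => fvF A
  | .ex A => fvF A
end

/-! function symbols occurring in an expression -/
mutual
def fsT : Tm → List ℕ
  | .bvar _ => []
  | .fvar _ => []
  | .func f ts => f :: fsTs ts
  | .eps A => fsF A
def fsTs : Tms → List ℕ
  | .nil => []
  | .cons t ts => fsT t ++ fsTs ts
def fsF : Fm → List ℕ
  | .atom _ ts => fsTs ts
  | .and A B => fsF A ++ fsF B
  | .or A B => fsF A ++ fsF B
  | .imp A B => fsF A ++ fsF B
  | .not A => fsF A
  | .all A => fsF A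
  | .ex A => fsF A
end

/-! number of symbols (size) -/
mutual
def szT : Tm → ℕ
  | .bvar _ => 1
  | .fvar _ => 1
  | .func _ ts => 1 + szTs ts
  | .eps A => 1 + szF A
def szTs : Tms → ℕ
  | .nil => 0
  | .cons t ts => szT t + szTs ts
def szF : Fm → ℕ
  | .atom _ ts => 1 + szTs ts
  | .and A B => 1 + szF A + szF B
  | .or A B => 1 + szF A + szF B
  | .imp A B => 1 + szF A + szF B
  | .not A => 1 + szF A
  | .all A => 1 + szF A
  | .ex A => 1 + szF A
end

/-! epsilon-freeness (first-order language) and quantifier-freeness (epsilon language) -/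
mutual
def noEpsT : Tm → Bool
  | .bvar _ => true
  | .fvar _ => true
  | .func _ ts => noEpsTs ts
  | .eps _ => false
def noEpsTs : Tms → Bool
  | .nil => true
  | .cons t ts => noEpsT t && noEpsTs ts
def noEpsF : Fm → Bool
  | .atom _ ts => noEpsTs ts
  | .and A B => noEpsF A && noEpsF B
  | .or A B => noEpsF A && noEpsF B
  | .imp A B => noEpsF A && noEpsF B
  | .not A => noEpsF A
  | .all A => noEpsF A
  | .ex A => noEpsF A
end

/-- `A` is a formula of the first-order language: it contains no epsilon terms. -/
def isFO (A : Fm) : Bool := noEpsF A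

/-- quantifier-freeness: `A` belongs to the language of the epsilon calculus
(propositional language over epsilon terms) iff `qfree A`. -/
def qfree : Fm → Bool
  | .atom _ _ => true
  | .and A B => qfree A && qfree B
  | .or A B => qfree A && qfree B
  | .imp A B => qfree A && qfree B
  | .not A => qfree A
  | .all _ => false
  | .ex _ => false

/-- The epsilon translation [A]^ε of a formula. -/
def epsT : Fm → Fm
  | .atom p ts => .atom p ts
  | .and A B => .and (epsT A) (epsT B)
  | .or A B => .or (epsT A) (epsT B)
  | .imp A B => .imp (epsT A) (epsT B)
  | .not A => .not (epsT A)
  | .ex A => inst0 (epsT A) (.eps (epsT A))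
  | .all A => inst0 (epsT A) (.eps (.not (epsT A)))

/-! ## The matrix A^M of a formula: delete all quantifiers and replace the
variables bound by them by fresh free variables. -/
mutual
def mxT (b d : ℕ) : Tm → Tm
  | .bvar n => if n < d then .fvar (b + (d - 1 - n)) else .bvar (n - d)
  | .fvar a => .fvar a
  | .func f ts => .func f (mxTs b d ts)
  | .eps A => .eps A          -- (the matrix is only used on epsilon-free formulas)
def mxTs (b d : ℕ) : Tms → Tms
  | .nil => .nil
  | .cons t ts => .cons (mxT b d t) (mxTs b d ts)
def mxF (b d : ℕ) : Fm → Fm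
  | .atom p ts => .atom p (mxTs b d ts)
  | .and A B => .and (mxF b d A) (mxF b d B)
  | .or A B => .or (mxF b d A) (mxF b d B)
  | .imp A B => .imp (mxF b d A) (mxF b d B)
  | .not A => .not (mxF b d A)
  | .all A => mxF b (d+1) A
  | .ex A => mxF b (d+1) A
end

def maxFv (A : Fm) : ℕ := (fvF A).foldr max 0

/-- the matrix A^M of A -/
def matrix (A : Fm) : Fm := mxF (maxFv A + 1) 0 A

/-- universal closure ∀x̄ A over all free variables of A -/
def uclose (A : Fm) : Fm :=
  ((fvF A).dedup).foldr (fun a B => Fm.all (abF a 0 B)) A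

/-! ## Weak/strong quantifier occurrences.
`posW A` : all quantifier occurrences of `A` are weak when `A` occurs in the
succedent; `negW A` : likewise for the antecedent. -/
mutual
def posW : Fm → Bool
  | .atom _ _ => true
  | .and A B => posW A && posW B
  | .or A B => posW A && posW B
  | .imp A B => negW A && posW B
  | .not A => negW A
  | .all _ => false
  | .ex A => posW A
def negW : Fm → Bool
  | .atom _ _ => true
  | .and A B => negW A && negW B
  | .or A B => negW A && negW B
  | .imp A B => posW A && negW B
  | .not A => posW A
  | .all A => negW A
  | .ex _ => false
end

/-- the sequent Γ ⊢ Δ contains weak quantifier occurrences only -/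
def WeakSeq (Γ Δ : List Fm) : Prop :=
  (∀ A ∈ Γ, negW A = true) ∧ (∀ A ∈ Δ, posW A = true)

/-- the sequent Γ ⊢ Δ is in the first-order language -/
def FOSeq (Γ Δ : List Fm) : Prop :=
  (∀ A ∈ Γ, isFO A = true) ∧ (∀ A ∈ Δ, isFO A = true)

/-- the sequent Γ ⊢ Δ is in the language of the epsilon calculus -/
def EpsSeq (Γ Δ : List Fm) : Prop :=
  (∀ A ∈ Γ, qfree A = true) ∧ (∀ A ∈ Δ, qfree A = true)

def fvSeq (Γ Δ : List Fm) : List ℕ :=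
  (Γ ++ Δ).foldr (fun A l => fvF A ++ l) []

def fsSeq (Γ Δ : List Fm) : List ℕ :=
  (Γ ++ Δ).foldr (fun A l => fsF A ++ l) []

def seqSize (Γ Δ : List Fm) : ℕ :=
  (Γ ++ Δ).foldr (fun A n => szF A + n) 0


/-! ## LK derivation trees.
`Deriv Γ Δ` are derivation trees of the sequent Γ ⊢ Δ built from the rules of
Gentzen's LK, where the strong quantifier rules `allR`/`exL` carry an
eigenvariable but *no* correctness condition; the various eigenvariable
disciplines (LK, LK⁺, LK⁺⁺) are imposed as predicates on the trees below. -/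
inductive Deriv : List Fm → List Fm → Type where
  | ax (A : Fm) : Deriv [A] [A]
  | andL (A B : Fm) (Γ Δ : List Fm) :
      Deriv (A :: B :: Γ) Δ → Deriv (Fm.and A B :: Γ) Δ
  | andR (A B : Fm) (Γ₁ Δ₁ Γ₂ Δ₂ : List Fm) :
      Deriv Γ₁ (A :: Δ₁) → Deriv Γ₂ (B :: Δ₂) →
      Deriv (Γ₁ ++ Γ₂) (Fm.and A B :: (Δ₁ ++ Δ₂))
  | orL (A B : Fm) (Γ₁ Δ₁ Γ₂ Δ₂ : List Fm) :
      Deriv (A :: Γ₁) Δ₁ → Deriv (B :: Γ₂) Δ₂ →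
      Deriv (Fm.or A B :: (Γ₁ ++ Γ₂)) (Δ₁ ++ Δ₂)
  | orR (A B : Fm) (Γ Δ : List Fm) :
      Deriv Γ (A :: B :: Δ) → Deriv Γ (Fm.or A B :: Δ)
  | impL (A B : Fm) (Γ₁ Δ₁ Γ₂ Δ₂ : List Fm) :
      Deriv Γ₁ (A :: Δ₁) → Deriv (B :: Γ₂) Δ₂ →
      Deriv (Fm.imp A B :: (Γ₁ ++ Γ₂)) (Δ₁ ++ Δ₂)
  | impR (A B : Fm) (Γ Δ : List Fm) :
      Deriv (A :: Γ) (B :: Δ) → Deriv Γ (Fm.imp A B :: Δ)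
  | notL (A : Fm) (Γ Δ : List Fm) :
      Deriv Γ (A :: Δ) → Deriv (Fm.not A :: Γ) Δ
  | notR (A : Fm) (Γ Δ : List Fm) :
      Deriv (A :: Γ) Δ → Deriv Γ (Fm.not A :: Δ)
  | wL (A : Fm) (Γ Δ : List Fm) : Deriv Γ Δ → Deriv (A :: Γ) Δ
  | wR (A : Fm) (Γ Δ : List Fm) : Deriv Γ Δ → Deriv Γ (A :: Δ)
  | cL (A : Fm) (Γ Δ : List Fm) : Deriv (A :: A :: Γ) Δ → Deriv (A :: Γ) Δ
  | cR (A : Fm) (Γ Δ : List Fm) : Deriv Γ (A :: A :: Δ) → Deriv Γ (A :: Δ)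
  | cut (A : Fm) (Γ₁ Δ₁ Γ₂ Δ₂ : List Fm) :
      Deriv Γ₁ (A :: Δ₁) → Deriv (A :: Γ₂) Δ₂ →
      Deriv (Γ₁ ++ Γ₂) (Δ₁ ++ Δ₂)
  | allL (t : Tm) (A : Fm) (Γ Δ : List Fm) :
      Deriv (inst0 A t :: Γ) Δ → Deriv (Fm.all A :: Γ) Δ
  | allR (a : ℕ) (A : Fm) (Γ Δ : List Fm) :
      Deriv Γ (inst0 A (Tm.fvar a) :: Δ) → Deriv Γ (Fm.all A :: Δ)
  | exL (a : ℕ) (A : Fm) (Γ Δ : List Fm) :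
      Deriv (inst0 A (Tm.fvar a) :: Γ) Δ → Deriv (Fm.ex A :: Γ) Δ
  | exR (t : Tm) (A : Fm) (Γ Δ : List Fm) :
      Deriv Γ (inst0 A t :: Δ) → Deriv Γ (Fm.ex A :: Δ)
  | permL (Γ Γ' Δ : List Fm) : Γ.Perm Γ' → Deriv Γ Δ → Deriv Γ' Δ
  | permR (Γ Δ Δ' : List Fm) : Δ.Perm Δ' → Deriv Γ Δ → Deriv Γ Δ'

namespace Deriv

/-- the size of a derivation: the number of inference steps occurring in it -/
def size : ∀ {Γ Δ}, Deriv Γ Δ → ℕ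
  | _, _, ax _ => 1
  | _, _, andL _ _ _ _ d => d.size + 1
  | _, _, andR _ _ _ _ _ _ d e => d.size + e.size + 1
  | _, _, orL _ _ _ _ _ _ d e => d.size + e.size + 1
  | _, _, orR _ _ _ _ d => d.size + 1
  | _, _, impL _ _ _ _ _ _ d e => d.size + e.size + 1
  | _, _, impR _ _ _ _ d => d.size + 1
  | _, _, notL _ _ _ d => d.size + 1
  | _, _, notR _ _ _ d => d.size + 1
  | _, _, wL _ _ _ d => d.size + 1
  | _, _, wR _ _ _ d => d.size + 1
  | _, _, cL _ _ _ d => d.size + 1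
  | _, _, cR _ _ _ d => d.size + 1
  | _, _, cut _ _ _ _ _ d e => d.size + e.size + 1
  | _, _, allL _ _ _ _ d => d.size + 1
  | _, _, allR _ _ _ _ d => d.size + 1
  | _, _, exL _ _ _ _ d => d.size + 1
  | _, _, exR _ _ _ _ d => d.size + 1
  | _, _, permL _ _ _ _ d => d.size + 1
  | _, _, permR _ _ _ _ d => d.size + 1

/-- the list of cut formulas occurring in a derivation -/
def cutFms : ∀ {Γ Δ}, Deriv Γ Δ → List Fm
  | _, _, ax _ => []
  | _, _, andL _ _ _ _ d => d.cutFms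
  | _, _, andR _ _ _ _ _ _ d e => d.cutFms ++ e.cutFms
  | _, _, orL _ _ _ _ _ _ d e => d.cutFms ++ e.cutFms
  | _, _, orR _ _ _ _ d => d.cutFms
  | _, _, impL _ _ _ _ _ _ d e => d.cutFms ++ e.cutFms
  | _, _, impR _ _ _ _ d => d.cutFms
  | _, _, notL _ _ _ d => d.cutFms
  | _, _, notR _ _ _ d => d.cutFms
  | _, _, wL _ _ _ d => d.cutFms
  | _, _, wR _ _ _ d => d.cutFms
  | _, _, cL _ _ _ d => d.cutFms
  | _, _, cR _ _ _ d => d.cutFms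
  | _, _, cut A _ _ _ _ d e => A :: (d.cutFms ++ e.cutFms)
  | _, _, allL _ _ _ _ d => d.cutFms
  | _, _, allR _ _ _ _ d => d.cutFms
  | _, _, exL _ _ _ _ d => d.cutFms
  | _, _, exR _ _ _ _ d => d.cutFms
  | _, _, permL _ _ _ _ d => d.cutFms
  | _, _, permR _ _ _ _ d => d.cutFms

/-- data of the strong quantifier inferences of a derivation:
(eigenvariable, auxiliary formula, main formula) -/
def strongs : ∀ {Γ Δ}, Deriv Γ Δ → List (ℕ × Fm × Fm)
  | _, _, ax _ => []
  | _, _, andL _ _ _ _ d => d.strongs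
  | _, _, andR _ _ _ _ _ _ d e => d.strongs ++ e.strongs
  | _, _, orL _ _ _ _ _ _ d e => d.strongs ++ e.strongs
  | _, _, orR _ _ _ _ d => d.strongs
  | _, _, impL _ _ _ _ _ _ d e => d.strongs ++ e.strongs
  | _, _, impR _ _ _ _ d => d.strongs
  | _, _, notL _ _ _ d => d.strongs
  | _, _, notR _ _ _ d => d.strongs
  | _, _, wL _ _ _ d => d.strongs
  | _, _, wR _ _ _ d => d.strongs
  | _, _, cL _ _ _ d => d.strongs
  | _, _, cR _ _ _ d => d.strongs
  | _, _, cut _ _ _ _ _ d e => d.strongs ++ e.strongs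
  | _, _, allL _ _ _ _ d => d.strongs
  | _, _, allR a A _ _ d => (a, inst0 A (Tm.fvar a), Fm.all A) :: d.strongs
  | _, _, exL a A _ _ d => (a, inst0 A (Tm.fvar a), Fm.ex A) :: d.strongs
  | _, _, exR _ _ _ _ d => d.strongs
  | _, _, permL _ _ _ _ d => d.strongs
  | _, _, permR _ _ _ _ d => d.strongs

/-- the standard (local) eigenvariable conditions of LK: the eigenvariable of a
strong quantifier inference does not occur free in its conclusion -/
def Std : ∀ {Γ Δ}, Deriv Γ Δ → Prop
  | _, _, ax _ => True
  | _, _, andL _ _ _ _ d => d.Std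
  | _, _, andR _ _ _ _ _ _ d e => d.Std ∧ e.Std
  | _, _, orL _ _ _ _ _ _ d e => d.Std ∧ e.Std
  | _, _, orR _ _ _ _ d => d.Std
  | _, _, impL _ _ _ _ _ _ d e => d.Std ∧ e.Std
  | _, _, impR _ _ _ _ d => d.Std
  | _, _, notL _ _ _ d => d.Std
  | _, _, notR _ _ _ d => d.Std
  | _, _, wL _ _ _ d => d.Std
  | _, _, wR _ _ _ d => d.Std
  | _, _, cL _ _ _ d => d.Std
  | _, _, cR _ _ _ d => d.Std
  | _, _, cut _ _ _ _ _ d e => d.Std ∧ e.Std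
  | _, _, allL _ _ _ _ d => d.Std
  | _, _, allR a A Γ Δ d => a ∉ fvSeq Γ (Fm.all A :: Δ) ∧ d.Std
  | _, _, exL a A Γ Δ d => a ∉ fvSeq (Fm.ex A :: Γ) Δ ∧ d.Std
  | _, _, exR _ _ _ _ d => d.Std
  | _, _, permL _ _ _ _ d => d.Std
  | _, _, permR _ _ _ _ d => d.Std

end Deriv

/-- the side variable relation `<_φ`: `b` is a side variable of `a` in `φ` if `φ`
contains a strong quantifier inference with eigenvariable `a` whose auxiliary
formula contains the free variable `b` -/
def sideRel {Γ Δ} (d : Deriv Γ Δ) (a b : ℕ) : Prop :=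
  ∃ e ∈ d.strongs, e.1 = a ∧ b ∈ fvF e.2.1 ∧ b ≠ a

/-- acyclicity of a binary relation -/
def Acyc (r : ℕ → ℕ → Prop) : Prop := ∀ x, ¬ Relation.TransGen r x x

/-- LK⁺-suitability of (all strong quantifier inferences of) a derivation:
substitutability, the side variable condition, and weak regularity. -/
def SuitP {Γ Δ} (d : Deriv Γ Δ) : Prop :=
  (∀ e ∈ d.strongs, e.1 ∉ fvSeq Γ Δ) ∧
  Acyc (sideRel d) ∧
  (d.strongs.map (·.1)).Nodup

/-- LK⁺⁺-suitability: substitutability, the side variable condition, and very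
weak regularity (equal eigenvariables only for equal main formulas). -/
def SuitPP {Γ Δ} (d : Deriv Γ Δ) : Prop :=
  (∀ e ∈ d.strongs, e.1 ∉ fvSeq Γ Δ) ∧
  Acyc (sideRel d) ∧
  (∀ e₁ ∈ d.strongs, ∀ e₂ ∈ d.strongs, e₁.1 = e₂.1 → e₁.2.2 = e₂.2.2)

/-! ## The sequent calculus Lε of the epsilon calculus:
atomic axioms, the propositional, structural and cut rules of LK, the weak
quantifier rules ∃_r and ∀_l producing epsilon terms, and a substitution rule
replacing the strong quantifier inferences. -/
inductive EDeriv : List Fm → List Fm → Type where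
  | ax (p : ℕ) (ts : Tms) : EDeriv [Fm.atom p ts] [Fm.atom p ts]
  | andL (A B : Fm) (Γ Δ : List Fm) :
      EDeriv (A :: B :: Γ) Δ → EDeriv (Fm.and A B :: Γ) Δ
  | andR (A B : Fm) (Γ₁ Δ₁ Γ₂ Δ₂ : List Fm) :
      EDeriv Γ₁ (A :: Δ₁) → EDeriv Γ₂ (B :: Δ₂) →
      EDeriv (Γ₁ ++ Γ₂) (Fm.and A B :: (Δ₁ ++ Δ₂))
  | orL (A B : Fm) (Γ₁ Δ₁ Γ₂ Δ₂ : List Fm) :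
      EDeriv (A :: Γ₁) Δ₁ → EDeriv (B :: Γ₂) Δ₂ →
      EDeriv (Fm.or A B :: (Γ₁ ++ Γ₂)) (Δ₁ ++ Δ₂)
  | orR (A B : Fm) (Γ Δ : List Fm) :
      EDeriv Γ (A :: B :: Δ) → EDeriv Γ (Fm.or A B :: Δ)
  | impL (A B : Fm) (Γ₁ Δ₁ Γ₂ Δ₂ : List Fm) :
      EDeriv Γ₁ (A :: Δ₁) → EDeriv (B :: Γ₂) Δ₂ →
      EDeriv (Fm.imp A B :: (Γ₁ ++ Γ₂)) (Δ₁ ++ Δ₂)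
  | impR (A B : Fm) (Γ Δ : List Fm) :
      EDeriv (A :: Γ) (B :: Δ) → EDeriv Γ (Fm.imp A B :: Δ)
  | notL (A : Fm) (Γ Δ : List Fm) :
      EDeriv Γ (A :: Δ) → EDeriv (Fm.not A :: Γ) Δ
  | notR (A : Fm) (Γ Δ : List Fm) :
      EDeriv (A :: Γ) Δ → EDeriv Γ (Fm.not A :: Δ)
  | wL (A : Fm) (Γ Δ : List Fm) : EDeriv Γ Δ → EDeriv (A :: Γ) Δ
  | wR (A : Fm) (Γ Δ : List Fm) : EDeriv Γ Δ → EDeriv Γ (A :: Δ)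
  | cL (A : Fm) (Γ Δ : List Fm) : EDeriv (A :: A :: Γ) Δ → EDeriv (A :: Γ) Δ
  | cR (A : Fm) (Γ Δ : List Fm) : EDeriv Γ (A :: A :: Δ) → EDeriv Γ (A :: Δ)
  | cut (A : Fm) (Γ₁ Δ₁ Γ₂ Δ₂ : List Fm) :
      EDeriv Γ₁ (A :: Δ₁) → EDeriv (A :: Γ₂) Δ₂ →
      EDeriv (Γ₁ ++ Γ₂) (Δ₁ ++ Δ₂)
  | allL (t : Tm) (A : Fm) (Γ Δ : List Fm) :
      EDeriv (inst0 A t :: Γ) Δ →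
      EDeriv (inst0 A (Tm.eps (Fm.not A)) :: Γ) Δ
  | exR (t : Tm) (A : Fm) (Γ Δ : List Fm) :
      EDeriv Γ (inst0 A t :: Δ) →
      EDeriv Γ (inst0 A (Tm.eps A) :: Δ)
  | subst (a : ℕ) (t : Tm) (Γ Δ : List Fm) :
      EDeriv Γ Δ → EDeriv (Γ.map (sfvF a t)) (Δ.map (sfvF a t))
  | permL (Γ Γ' Δ : List Fm) : Γ.Perm Γ' → EDeriv Γ Δ → EDeriv Γ' Δ
  | permR (Γ Δ Δ' : List Fm) : Δ.Perm Δ' → EDeriv Γ Δ → EDeriv Γ Δ'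

namespace EDeriv

/-- the size of an Lε derivation -/
def size : ∀ {Γ Δ}, EDeriv Γ Δ → ℕ
  | _, _, ax _ _ => 1
  | _, _, andL _ _ _ _ d => d.size + 1
  | _, _, andR _ _ _ _ _ _ d e => d.size + e.size + 1
  | _, _, orL _ _ _ _ _ _ d e => d.size + e.size + 1
  | _, _, orR _ _ _ _ d => d.size + 1
  | _, _, impL _ _ _ _ _ _ d e => d.size + e.size + 1
  | _, _, impR _ _ _ _ d => d.size + 1
  | _, _, notL _ _ _ d => d.size + 1
  | _, _, notR _ _ _ d => d.size + 1
  | _, _, wL _ _ _ d => d.size + 1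
  | _, _, wR _ _ _ d => d.size + 1
  | _, _, cL _ _ _ d => d.size + 1
  | _, _, cR _ _ _ d => d.size + 1
  | _, _, cut _ _ _ _ _ d e => d.size + e.size + 1
  | _, _, allL _ _ _ _ d => d.size + 1
  | _, _, exR _ _ _ _ d => d.size + 1
  | _, _, subst _ _ _ _ d => d.size + 1
  | _, _, permL _ _ _ _ d => d.size + 1
  | _, _, permR _ _ _ _ d => d.size + 1

/-- the list of cut formulas occurring in an Lε derivation -/
def cutFms : ∀ {Γ Δ}, EDeriv Γ Δ → List Fm
  | _, _, ax _ _ => []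
  | _, _, andL _ _ _ _ d => d.cutFms
  | _, _, andR _ _ _ _ _ _ d e => d.cutFms ++ e.cutFms
  | _, _, orL _ _ _ _ _ _ d e => d.cutFms ++ e.cutFms
  | _, _, orR _ _ _ _ d => d.cutFms
  | _, _, impL _ _ _ _ _ _ d e => d.cutFms ++ e.cutFms
  | _, _, impR _ _ _ _ d => d.cutFms
  | _, _, notL _ _ _ d => d.cutFms
  | _, _, notR _ _ _ d => d.cutFms
  | _, _, wL _ _ _ d => d.cutFms
  | _, _, wR _ _ _ d => d.cutFms
  | _, _, cL _ _ _ d => d.cutFms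
  | _, _, cR _ _ _ d => d.cutFms
  | _, _, cut A _ _ _ _ d e => A :: (d.cutFms ++ e.cutFms)
  | _, _, allL _ _ _ _ d => d.cutFms
  | _, _, exR _ _ _ _ d => d.cutFms
  | _, _, subst _ _ _ _ d => d.cutFms
  | _, _, permL _ _ _ _ d => d.cutFms
  | _, _, permR _ _ _ _ d => d.cutFms

end EDeriv

/-! ## Elementary functions and polynomial bounds -/

/-- `iterExp k n` is the `k`-fold iterated exponential 2^2^...^n. -/
def iterExp : ℕ → ℕ → ℕ
  | 0, n => n
  | k+1, n => 2 ^ iterExp k n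

/-- A function ℕ → ℕ is elementary (in the sense of Kalmár: definable by a
quantifier-free formula from +, ×, and x ↦ 2^x) iff it is majorized by some
fixed iterated exponential; we use this growth-rate characterization. -/
def IsElementary (f : ℕ → ℕ) : Prop := ∃ k, ∀ n, f n ≤ iterExp k n

/-- `g` is polynomially bounded -/
def PolyBdd (g : ℕ → ℕ) : Prop := ∃ p : Polynomial ℕ, ∀ n, g n ≤ p.eval n

/-! ## Skolemization (relationally): `SkP F A B` (`SkN F A B`) holds if `B` is
obtained from `A`, occurring in the succedent (antecedent), by replacing the
strong quantifiers by terms built from fresh function symbols in `F`. -/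
mutual
inductive SkP (F : ℕ → Prop) : Fm → Fm → Prop where
  | atom (p ts) : SkP F (Fm.atom p ts) (Fm.atom p ts)
  | and {A A' B B'} : SkP F A A' → SkP F B B' → SkP F (Fm.and A B) (Fm.and A' B')
  | or {A A' B B'} : SkP F A A' → SkP F B B' → SkP F (Fm.or A B) (Fm.or A' B')
  | imp {A A' B B'} : SkN F A A' → SkP F B B' → SkP F (Fm.imp A B) (Fm.imp A' B')
  | not {A A'} : SkN F A A' → SkP F (Fm.not A) (Fm.not A')
  | ex {A A'} : SkP F A A' → SkP F (Fm.ex A) (Fm.ex A')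
  | all {A B} (f : ℕ) (ts : Tms) : F f →
      SkP F (inst0 A (Tm.func f ts)) B → SkP F (Fm.all A) B
inductive SkN (F : ℕ → Prop) : Fm → Fm → Prop where
  | atom (p ts) : SkN F (Fm.atom p ts) (Fm.atom p ts)
  | and {A A' B B'} : SkN F A A' → SkN F B B' → SkN F (Fm.and A B) (Fm.and A' B')
  | or {A A' B B'} : SkN F A A' → SkN F B B' → SkN F (Fm.or A B) (Fm.or A' B')
  | imp {A A' B B'} : SkP F A A' → SkN F B B' → SkN F (Fm.imp A B) (Fm.imp A' B')
  | not {A A'} : SkP F A A' → SkN F (Fm.not A) (Fm.not A')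
  | all {A A'} : SkN F A A' → SkN F (Fm.all A) (Fm.all A')
  | ex {A B} (f : ℕ) (ts : Tms) : F f →
      SkN F (inst0 A (Tm.func f ts)) B → SkN F (Fm.ex A) B
end

/-- `S'` is a Skolemization of the sequent `S` using fresh function symbols from `F` -/
def SkolemSeq (F : ℕ → Prop) (S S' : List Fm × List Fm) : Prop :=
  List.Forall₂ (SkN F) S.1 S'.1 ∧ List.Forall₂ (SkP F) S.2 S'.2

/-! ## Closed terms and substitution -/
mutual
def clT (k : ℕ) : Tm → Prop
  | .bvar n => n < k
  | .fvar _ => True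
  | .func _ ts => clTs k ts
  | .eps A => clF (k+1) A
def clTs (k : ℕ) : Tms → Prop
  | .nil => True
  | .cons t ts => clT k t ∧ clTs k ts
def clF (k : ℕ) : Fm → Prop
  | .atom _ ts => clTs k ts
  | .and A B => clF k A ∧ clF k B
  | .or A B => clF k A ∧ clF k B
  | .imp A B => clF k A ∧ clF k B
  | .not A => clF k A
  | .all A => clF (k+1) A
  | .ex A => clF (k+1) A
end

mutual
theorem lift_clT (k i : ℕ) (h : k ≤ i) : ∀ t : Tm, clT k t → liftT i t = t
  | .bvar n, hc => by
      simp only [clT] at hc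
      simp only [liftT]; rw [if_pos (by omega)]
  | .fvar _, _ => by simp [liftT]
  | .func _ ts, hc => by
      simp only [clT] at hc
      simp [liftT, lift_clTs k i h ts hc]
  | .eps A, hc => by
      simp only [clT] at hc
      simp [liftT, lift_clF (k+1) (i+1) (by omega) A hc]
theorem lift_clTs (k i : ℕ) (h : k ≤ i) : ∀ t : Tms, clTs k t → liftTs i t = t
  | .nil, _ => by simp [liftTs]
  | .cons t ts, hc => by
      simp only [clTs] at hc
      simp [liftTs, lift_clT k i h t hc.1, lift_clTs k i h ts hc.2]
theorem lift_clF (k i : ℕ) (h : k ≤ i) : ∀ A : Fm, clF k A → liftF i A = A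
  | .atom _ ts, hc => by
      simp only [clF] at hc
      simp [liftF, lift_clTs k i h ts hc]
  | .and A B, hc => by
      simp only [clF] at hc
      simp [liftF, lift_clF k i h A hc.1, lift_clF k i h B hc.2]
  | .or A B, hc => by
      simp only [clF] at hc
      simp [liftF, lift_clF k i h A hc.1, lift_clF k i h B hc.2]
  | .imp A B, hc => by
      simp only [clF] at hc
      simp [liftF, lift_clF k i h A hc.1, lift_clF k i h B hc.2]
  | .not A, hc => by
      simp only [clF] at hc
      simp [liftF, lift_clF k i h A hc]
  | .all A, hc => by
      simp only [clF] at hc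
      simp [liftF, lift_clF (k+1) (i+1) (by omega) A hc]
  | .ex A, hc => by
      simp only [clF] at hc
      simp [liftF, lift_clF (k+1) (i+1) (by omega) A hc]
end

mutual
theorem sub_clT (k i : ℕ) (u : Tm) (h : k ≤ i) : ∀ t : Tm, clT k t → subT i u t = t
  | .bvar n, hc => by
      simp only [clT] at hc
      simp only [subT]; rw [if_neg (by omega), if_pos (by omega)]
  | .fvar _, _ => by simp [subT]
  | .func _ ts, hc => by
      simp only [clT] at hc
      simp [subT, sub_clTs k i u h ts hc]
  | .eps A, hc => by
      simp only [clT] at hc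
      simp [subT, sub_clF (k+1) (i+1) _ (by omega) A hc]
theorem sub_clTs (k i : ℕ) (u : Tm) (h : k ≤ i) : ∀ t : Tms, clTs k t → subTs i u t = t
  | .nil, _ => by simp [subTs]
  | .cons t ts, hc => by
      simp only [clTs] at hc
      simp [subTs, sub_clT k i u h t hc.1, sub_clTs k i u h ts hc.2]
theorem sub_clF (k i : ℕ) (u : Tm) (h : k ≤ i) : ∀ A : Fm, clF k A → subF i u A = A
  | .atom _ ts, hc => by
      simp only [clF] at hc
      simp [subF, sub_clTs k i u h ts hc]
  | .and A B, hc => by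
      simp only [clF] at hc
      simp [subF, sub_clF k i u h A hc.1, sub_clF k i u h B hc.2]
  | .or A B, hc => by
      simp only [clF] at hc
      simp [subF, sub_clF k i u h A hc.1, sub_clF k i u h B hc.2]
  | .imp A B, hc => by
      simp only [clF] at hc
      simp [subF, sub_clF k i u h A hc.1, sub_clF k i u h B hc.2]
  | .not A, hc => by
      simp only [clF] at hc
      simp [subF, sub_clF k i u h A hc]
  | .all A, hc => by
      simp only [clF] at hc
      simp [subF, sub_clF (k+1) (i+1) _ (by omega) A hc]
  | .ex A, hc => by
      simp only [clF] at hc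
      simp [subF, sub_clF (k+1) (i+1) _ (by omega) A hc]
end

mutual
theorem cl_liftT (k i : ℕ) : ∀ t : Tm, clT k t → clT (k+1) (liftT i t)
  | .bvar n, hc => by
      simp only [clT] at hc
      simp only [liftT]; split_ifs <;> simp only [clT] <;> omega
  | .fvar _, _ => by simp [liftT, clT]
  | .func _ ts, hc => by
      simp only [clT] at hc
      simp [liftT, clT, cl_liftTs k i ts hc]
  | .eps A, hc => by
      simp only [clT] at hc
      simp [liftT, clT, cl_liftF (k+1) (i+1) A hc]
theorem cl_liftTs (k i : ℕ) : ∀ t : Tms, clTs k t → clTs (k+1) (liftTs i t)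
  | .nil, _ => by simp [liftTs, clTs]
  | .cons t ts, hc => by
      simp only [clTs] at hc
      simp [liftTs, clTs, cl_liftT k i t hc.1, cl_liftTs k i ts hc.2]
theorem cl_liftF (k i : ℕ) : ∀ A : Fm, clF k A → clF (k+1) (liftF i A)
  | .atom _ ts, hc => by
      simp only [clF] at hc
      simp [liftF, clF, cl_liftTs k i ts hc]
  | .and A B, hc => by
      simp only [clF] at hc
      simp [liftF, clF, cl_liftF k i A hc.1, cl_liftF k i B hc.2]
  | .or A B, hc => by
      simp only [clF] at hc
      simp [liftF, clF, cl_liftF k i A hc.1, cl_liftF k i B hc.2]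
  | .imp A B, hc => by
      simp only [clF] at hc
      simp [liftF, clF, cl_liftF k i A hc.1, cl_liftF k i B hc.2]
  | .not A, hc => by
      simp only [clF] at hc
      simp [liftF, clF, cl_liftF k i A hc]
  | .all A, hc => by
      simp only [clF] at hc
      simp [liftF, clF, cl_liftF (k+1) (i+1) A hc]
  | .ex A, hc => by
      simp only [clF] at hc
      simp [liftF, clF, cl_liftF (k+1) (i+1) A hc]
end

mutual
theorem sub_liftT (u : Tm) (hu : clT 0 u) (k i : ℕ) (h : i ≤ k) :
    ∀ t : Tm, subT (k+1) u (liftT i t) = liftT i (subT k u t)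
  | .bvar n => by
      have hl : liftT i u = u := lift_clT 0 i (by omega) u hu
      simp only [liftT, subT]
      by_cases h1 : n < i
      · simp only [if_pos h1, subT]
        rw [if_neg (by omega), if_pos (by omega), if_neg (by omega), if_pos (by omega)]
        simp [liftT, h1]
      · simp only [if_neg h1, subT]
        by_cases h2 : n = k
        · simp [h2, hl]
        · by_cases h3 : n < k
          · rw [if_neg (by omega), if_pos (by omega), if_neg (by omega), if_pos (by omega)]
            simp [liftT, h1]
          · rw [if_neg (by omega), if_neg (by omega), if_neg (by omega), if_neg (by omega)]
            simp only [liftT]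
            rw [if_neg (by omega)]
            congr 1; omega
  | .fvar _ => by simp [liftT, subT]
  | .func _ ts => by simp [liftT, subT, sub_liftTs u hu k i h ts]
  | .eps A => by
      have hl : liftT 0 u = u := lift_clT 0 0 (by omega) u hu
      simp [liftT, subT, hl, sub_liftF u hu (k+1) (i+1) (by omega) A]
theorem sub_liftTs (u : Tm) (hu : clT 0 u) (k i : ℕ) (h : i ≤ k) :
    ∀ t : Tms, subTs (k+1) u (liftTs i t) = liftTs i (subTs k u t)
  | .nil => by simp [liftTs, subTs]
  | .cons t ts => by simp [liftTs, subTs, sub_liftT u hu k i h t, sub_liftTs u hu k i h ts]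
theorem sub_liftF (u : Tm) (hu : clT 0 u) (k i : ℕ) (h : i ≤ k) :
    ∀ A : Fm, subF (k+1) u (liftF i A) = liftF i (subF k u A)
  | .atom _ ts => by simp [liftF, subF, sub_liftTs u hu k i h ts]
  | .and A B => by simp [liftF, subF, sub_liftF u hu k i h A, sub_liftF u hu k i h B]
  | .or A B => by simp [liftF, subF, sub_liftF u hu k i h A, sub_liftF u hu k i h B]
  | .imp A B => by simp [liftF, subF, sub_liftF u hu k i h A, sub_liftF u hu k i h B]
  | .not A => by simp [liftF, subF, sub_liftF u hu k i h A]
  | .all A => by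
      have hl : liftT 0 u = u := lift_clT 0 0 (by omega) u hu
      simp [liftF, subF, hl, sub_liftF u hu (k+1) (i+1) (by omega) A]
  | .ex A => by
      have hl : liftT 0 u = u := lift_clT 0 0 (by omega) u hu
      simp [liftF, subF, hl, sub_liftF u hu (k+1) (i+1) (by omega) A]
end

/-! ## The language of the example and the coding of the relativised classes -/

abbrev zr : Tm := .func 0 .nil
abbrev sc (x : Tm) : Tm := .func 1 (.cons x .nil)
abbrev gg (y x : Tm) : Tm := .func 2 (.cons y (.cons x .nil))
abbrev im (p q : Tm) : Tm := .func 3 (.cons p (.cons q .nil))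
abbrev Np (x : Tm) : Fm := .atom 0 (.cons x .nil)
abbrev Ee (x y : Tm) : Fm := .atom 1 (.cons x (.cons y .nil))

def axN0 : Fm := Np zr
def axSP : Fm := .all (.imp (Np (.bvar 0)) (Np (sc (.bvar 0))))
def axT : Fm := .all (.imp (Np (.bvar 0)) (Np (.bvar 0)))
def axE1 : Fm := .all (Ee (sc (.bvar 0)) (gg (.bvar 0) zr))
def axE2 : Fm := .all (.all (Ee (gg (gg (.bvar 1) (.bvar 0)) (.bvar 0)) (gg (.bvar 1) (sc (.bvar 0)))))
def axE3 : Fm := .all (.all (.all (.imp (Ee (.bvar 2) (.bvar 1))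
  (Ee (gg (.bvar 0) (.bvar 2)) (gg (.bvar 0) (.bvar 1))))))
def axE4 : Fm := .all (.all (.imp (Ee (.bvar 1) (.bvar 0)) (.imp (Np (.bvar 1)) (Np (.bvar 0)))))
def axI1 : Fm := .all (.all (.imp (Np (im (.bvar 1) (.bvar 0))) (.imp (Np (.bvar 1)) (Np (.bvar 0)))))
def axI2 : Fm := .all (.all (.imp (.imp (Np (.bvar 1)) (Np (.bvar 0))) (Np (im (.bvar 1) (.bvar 0)))))

def axs : List Fm := [axN0, axSP, axT, axE1, axE2, axE3, axE4, axI1, axI2]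

/-- the goal terms: value of `gt i` is a tower of height `i` -/
def gt : ℕ → Tm
  | 0 => zr
  | i+1 => gg zr (gt i)

/-- `Np (TT j x)` expresses that `x` belongs to the `j`-th class -/
def TT : ℕ → Tm → Tm
  | 0, x => x
  | j+1, x =>
      im (TT j (.eps (.not (Np (im (TT j (.bvar 0)) (TT j (gg (.bvar 0) (liftT 0 x))))))))
        (TT j (gg (.eps (.not (Np (im (TT j (.bvar 0)) (TT j (gg (.bvar 0) (liftT 0 x))))))) x))

def WW (j : ℕ) (x : Tm) : Fm := Np (im (TT j (.bvar 0)) (TT j (gg (.bvar 0) (liftT 0 x))))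
def ee (j : ℕ) (x : Tm) : Tm := .eps (.not (WW j x))

theorem TT_succ (j : ℕ) (x : Tm) : TT (j+1) x = im (TT j (ee j x)) (TT j (gg (ee j x) x)) := rfl

theorem cl_gt : ∀ i, clT 0 (gt i)
  | 0 => by simp [gt, clT, clTs]
  | i+1 => by simp [gt, clT, clTs, cl_gt i]

theorem cl_TT : ∀ (j k : ℕ) (x : Tm), clT k x → clT k (TT j x)
  | 0, _, _, h => h
  | j+1, k, x, h => by
      have h1 : clT (k+1) (TT j (.bvar 0)) := cl_TT j (k+1) _ (by simp [clT])
      have h2 : clT (k+1) (TT j (gg (.bvar 0) (liftT 0 x))) :=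
        cl_TT j (k+1) _ (by simp [clT, clTs, cl_liftT k 0 x h])
      have h3 : clT k (ee j x) := by
        simp only [ee, WW, clT, clF, clTs]; simp [h1, h2]
      rw [TT_succ]
      simp only [clT, clTs]
      exact ⟨cl_TT j k _ h3, cl_TT j k _ (by simp [clT, clTs, h3, h]), trivial⟩

theorem cl_ee (j k : ℕ) (x : Tm) (h : clT k x) : clT k (ee j x) := by
  have h1 : clT (k+1) (TT j (.bvar 0)) := cl_TT j (k+1) _ (by simp [clT])
  have h2 : clT (k+1) (TT j (gg (.bvar 0) (liftT 0 x))) :=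
    cl_TT j (k+1) _ (by simp [clT, clTs, cl_liftT k 0 x h])
  simp only [ee, WW, clT, clF, clTs]; simp [h1, h2]

theorem sub_TT (u : Tm) (hu : clT 0 u) :
    ∀ (j k : ℕ) (x : Tm), subT k u (TT j x) = TT j (subT k u x)
  | 0, _, _ => rfl
  | j+1, k, x => by
      have hl : liftT 0 u = u := lift_clT 0 0 (by omega) u hu
      have he : subT k u (ee j x) = ee j (subT k u x) := by
        simp only [ee, WW, subT, subF, subTs, hl]
        rw [sub_TT u hu j, sub_TT u hu j]
        simp [subT, subTs, sub_liftT u hu k 0 (by omega)]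
      rw [TT_succ, TT_succ]
      simp only [subT, subTs]
      rw [sub_TT u hu j, sub_TT u hu j, he]
      simp [subT, subTs, he]

theorem inst_WW (j : ℕ) (x u : Tm) (hx : clT 0 x) (hu : clT 0 u) :
    inst0 (WW j x) u = Np (im (TT j u) (TT j (gg u x))) := by
  have hl : liftT 0 x = x := lift_clT 0 0 (by omega) x hx
  have hs : subT 0 u x = x := sub_clT 0 0 u (by omega) x hx
  simp only [inst0, WW, subF, subTs, subT]
  rw [sub_TT u hu j, sub_TT u hu j]
  simp [subT, subTs, hl, hs]

theorem inst_WW_ee (j : ℕ) (x : Tm) (hx : clT 0 x) :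
    inst0 (WW j x) (.eps (.not (WW j x))) = Np (TT (j+1) x) := by
  have := inst_WW j x (ee j x) hx (cl_ee j 0 x hx)
  rw [TT_succ, ← this]; rfl

set_option linter.unusedSimpArgs false

/-! ## Short cut-free derivations in the epsilon calculus -/

def Pr (n : ℕ) (Γ Δ : List Fm) : Prop := ∃ e : EDeriv Γ Δ, e.cutFms = [] ∧ e.size ≤ n

theorem Pr.mono {n m : ℕ} {Γ Δ : List Fm} (h : Pr n Γ Δ) (hnm : n ≤ m) : Pr m Γ Δ := by
  obtain ⟨e, h1, h2⟩ := h
  exact ⟨e, h1, h2.trans hnm⟩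

theorem Pr.ax (p : ℕ) (ts : Tms) : Pr 1 [.atom p ts] [.atom p ts] :=
  ⟨EDeriv.ax p ts, rfl, le_refl _⟩

theorem Pr.wL {n : ℕ} {Γ Δ : List Fm} (A : Fm) (h : Pr n Γ Δ) : Pr (n+1) (A :: Γ) Δ := by
  obtain ⟨e, h1, h2⟩ := h
  exact ⟨EDeriv.wL A Γ Δ e, by simpa [EDeriv.cutFms] using h1, by simpa [EDeriv.size] using h2⟩

theorem Pr.cL {n : ℕ} {A : Fm} {Γ Δ : List Fm} (h : Pr n (A :: A :: Γ) Δ) :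
    Pr (n+1) (A :: Γ) Δ := by
  obtain ⟨e, h1, h2⟩ := h
  exact ⟨EDeriv.cL A Γ Δ e, by simpa [EDeriv.cutFms] using h1, by simpa [EDeriv.size] using h2⟩

theorem Pr.permL {n : ℕ} {Γ Γ' Δ : List Fm} (hp : Γ.Perm Γ') (h : Pr n Γ Δ) :
    Pr (n+1) Γ' Δ := by
  obtain ⟨e, h1, h2⟩ := h
  exact ⟨EDeriv.permL Γ Γ' Δ hp e, by simpa [EDeriv.cutFms] using h1,
    by simpa [EDeriv.size] using h2⟩

theorem Pr.impR {n : ℕ} {A B : Fm} {Γ Δ : List Fm} (h : Pr n (A :: Γ) (B :: Δ)) :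
    Pr (n+1) Γ (Fm.imp A B :: Δ) := by
  obtain ⟨e, h1, h2⟩ := h
  exact ⟨EDeriv.impR A B Γ Δ e, by simpa [EDeriv.cutFms] using h1,
    by simpa [EDeriv.size] using h2⟩

theorem Pr.impL {n m : ℕ} {A B C : Fm} {Γ₁ Γ₂ : List Fm} (h : Pr n Γ₁ [A])
    (h' : Pr m (B :: Γ₂) [C]) : Pr (n+m+1) (Fm.imp A B :: (Γ₁ ++ Γ₂)) [C] := by
  obtain ⟨e, h1, h2⟩ := h
  obtain ⟨e', h1', h2'⟩ := h'
  refine ⟨EDeriv.impL A B Γ₁ [] Γ₂ [C] e e', by simp [EDeriv.cutFms, h1, h1'], ?_⟩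
  simp only [EDeriv.size]; omega

theorem Pr.allL {n : ℕ} (t : Tm) (A : Fm) {Γ Δ : List Fm} (h : Pr n (inst0 A t :: Γ) Δ) :
    Pr (n+1) (inst0 A (Tm.eps (Fm.not A)) :: Γ) Δ := by
  obtain ⟨e, h1, h2⟩ := h
  exact ⟨EDeriv.allL t A Γ Δ e, by simpa [EDeriv.cutFms] using h1,
    by simpa [EDeriv.size] using h2⟩

/-- contract a whole list of formulas into a context containing them -/
theorem Pr.absorb {Δ L : List Fm} : ∀ (Γ : List Fm) (n : ℕ), (∀ A ∈ Γ, A ∈ L) →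
    Pr n (Γ ++ L) Δ → Pr (n + 3 * Γ.length) L Δ
  | [], n, _, h => by simpa using h
  | A :: Γ, n, hs, h => by
      have hA : A ∈ Γ ++ L := List.mem_append_right _ (hs A (by simp))
      obtain ⟨R, hR⟩ : ∃ R, (Γ ++ L).Perm (A :: R) := by
        classical
        exact ⟨_, List.perm_cons_erase hA⟩
      have h1 : Pr (n+1) (A :: A :: R) Δ := Pr.permL (List.Perm.cons A hR) h
      have h2 := Pr.permL hR.symm (Pr.cL h1)
      have h3 := Pr.absorb Γ _ (fun B hB => hs B (by simp [hB])) h2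
      exact h3.mono (by simp only [List.length_cons]; omega)

theorem Pr.weakenList {n : ℕ} {Γ Δ : List Fm} (h : Pr n Γ Δ) :
    ∀ L : List Fm, Pr (n + L.length) (L ++ Γ) Δ
  | [] => by simpa using h
  | A :: L => by
      have := Pr.wL A (Pr.weakenList h L)
      exact this.mono (by simp only [List.length_cons]; omega)

theorem Pr.finish {n : ℕ} {Γ L Δ : List Fm} (h : Pr n Γ Δ) (hs : ∀ A ∈ Γ, A ∈ L) :
    Pr (n + L.length + 1 + 3 * Γ.length) L Δ :=
  Pr.absorb Γ _ hs (Pr.permL List.perm_append_comm (Pr.weakenList h L))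

theorem Pr.contractMany {A : Fm} {Γ Δ : List Fm} : ∀ (k n : ℕ),
    Pr n (List.replicate (k+1) A ++ Γ) Δ → Pr (n+k) (A :: Γ) Δ
  | 0, n, h => by simpa using h
  | k+1, n, h => by
      have h1 : Pr (n+1) (List.replicate (k+1) A ++ Γ) Δ := by
        have h' : Pr n (A :: A :: (List.replicate k A ++ Γ)) Δ := by
          simpa [List.replicate_succ] using h
        simpa [List.replicate_succ] using Pr.cL h'
      exact (Pr.contractMany k _ h1).mono (by omega)

def G0 : List Fm := axs.map epsT

/-- `C` has a cut-free derivation of measure `n` from the axioms and hypotheses in `P` -/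
def Der (n : ℕ) (P : Set Fm) (C : Fm) : Prop :=
  ∃ (Γ : List Fm) (s : ℕ), (∀ A ∈ Γ, A ∈ G0 ∨ A ∈ P) ∧ Pr s Γ [C] ∧ s + 3 * Γ.length ≤ n

theorem Der.mono {n m : ℕ} {P Q : Set Fm} {C : Fm} (h : Der n P C) (hnm : n ≤ m)
    (hPQ : P ⊆ Q) : Der m Q C := by
  obtain ⟨Γ, s, h1, h2, h3⟩ := h
  exact ⟨Γ, s, fun A hA => (h1 A hA).imp id (fun h => hPQ h), h2, h3.trans hnm⟩

theorem discharge {s : ℕ} {P : Set Fm} {A : Fm} {Γ Δ : List Fm}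
    (h : ∀ B ∈ Γ, B ∈ G0 ∨ B ∈ insert A P) (hp : Pr s Γ Δ) :
    ∃ (Γ' : List Fm) (s' : ℕ), (∀ B ∈ Γ', B ∈ G0 ∨ B ∈ P) ∧ Pr s' (A :: Γ') Δ ∧
      s' + 3 * Γ'.length ≤ s + 3 * Γ.length + 1 := by
  classical
  by_cases hA : A ∈ Γ
  · obtain ⟨k, hk⟩ : ∃ k, Γ.count A = k + 1 :=
      ⟨Γ.count A - 1, by have := List.count_pos_iff.mpr hA; omega⟩
    have hperm : Γ.Perm (List.replicate (k+1) A ++ Γ.filter (fun B => ¬ (B = A))) := by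
      have := (List.filter_append_perm (fun B => decide (B = A)) Γ).symm
      have e : Γ.filter (fun B => decide (B = A)) = List.replicate (k+1) A := by
        rw [← hk]
        rw [← List.filter_beq]
        apply List.filter_congr
        intro B _
        by_cases hBA : B = A <;> simp [hBA]
      rw [e] at this
      simpa using this
    have hlen := hperm.length_eq
    simp only [List.length_append, List.length_replicate] at hlen
    refine ⟨_, _, ?_, Pr.contractMany k _ (Pr.permL hperm hp), by omega⟩
    intro B hB
    rw [List.mem_filter] at hB
    rcases h B hB.1 with h1 | h1
    · exact Or.inl h1
    · rcases h1 with h1 | h1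
      · simp [h1] at hB
      · exact Or.inr h1
  · refine ⟨Γ, s+1, ?_, Pr.wL A hp, by omega⟩
    intro B hB
    rcases h B hB with h1 | h1
    · exact Or.inl h1
    · rcases h1 with h1 | h1
      · exact absurd (h1 ▸ hB) hA
      · exact Or.inr h1

/-- `A` is an instance of an axiom -/
def Av (A : Fm) : Prop :=
  ∃ X ∈ G0, ∀ (s : ℕ) (Γ Δ : List Fm), Pr s (A :: Γ) Δ → Pr (s+3) (X :: Γ) Δ

theorem Der.hyp {P : Set Fm} {p : ℕ} {ts : Tms} (h : Fm.atom p ts ∈ P) :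
    Der 4 P (.atom p ts) :=
  ⟨[.atom p ts], 1, by simp [h], Pr.ax p ts, by simp⟩

theorem Der.av {P : Set Fm} {p : ℕ} {ts : Tms} (h : Av (Fm.atom p ts)) :
    Der 7 P (.atom p ts) := by
  obtain ⟨X, hX, hs⟩ := h
  exact ⟨[X], 4, by simp [hX], hs 1 [] _ (Pr.ax p ts), by simp⟩

theorem Der.impI {n : ℕ} {P : Set Fm} {A B : Fm} (h : Der n (insert A P) B) :
    Der (n+2) P (.imp A B) := by
  obtain ⟨Γ, s, h1, h2, h3⟩ := h
  obtain ⟨Γ', s', h1', h2', h3'⟩ := discharge h1 h2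
  exact ⟨Γ', s'+1, h1', Pr.impR h2', by omega⟩

theorem Der.mp {n : ℕ} {P : Set Fm} {A : Fm} {p : ℕ} {ts : Tms}
    (hA : Av (.imp A (.atom p ts))) (h : Der n P A) : Der (n+8) P (.atom p ts) := by
  obtain ⟨X, hX, hs⟩ := hA
  obtain ⟨Γ, s, h1, h2, h3⟩ := h
  refine ⟨X :: (Γ ++ []), _, ?_, hs _ _ _ (Pr.impL h2 (Pr.ax p ts)), ?_⟩
  · intro B hB
    simp at hB
    rcases hB with rfl | hB
    · exact Or.inl hX
    · exact h1 B hB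
  · simp; omega

theorem Der.mp2 {n m : ℕ} {P : Set Fm} {A B : Fm} {p : ℕ} {ts : Tms}
    (hA : Av (.imp A (.imp B (.atom p ts)))) (h : Der n P A) (h' : Der m P B) :
    Der (n+m+10) P (.atom p ts) := by
  obtain ⟨X, hX, hs⟩ := hA
  obtain ⟨Γ, s, h1, h2, h3⟩ := h
  obtain ⟨Γ', s', h1', h2', h3'⟩ := h'
  refine ⟨X :: (Γ ++ (Γ' ++ [])), _, ?_,
    hs _ _ _ (Pr.impL h2 (Pr.impL h2' (Pr.ax p ts))), ?_⟩
  · intro C hC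
    simp at hC
    rcases hC with rfl | hC | hC
    · exact Or.inl hX
    · exact h1 C hC
    · exact h1' C hC
  · simp; omega

theorem Der.cutAv {n m : ℕ} {P : Set Fm} {A C : Fm}
    (hA : Av (.imp A A)) (h : Der n P A) (h' : Der m (insert A P) C) :
    Der (n+m+10) P C := by
  obtain ⟨X, hX, hs⟩ := hA
  obtain ⟨Γ, s, h1, h2, h3⟩ := h
  obtain ⟨Γ₀, s₀, h1₀, h2₀, h3₀⟩ := h'
  obtain ⟨Γ', s', h1', h2', h3'⟩ := discharge h1₀ h2₀
  refine ⟨X :: (Γ ++ Γ'), _, ?_, hs _ _ _ (Pr.impL h2 h2'), ?_⟩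
  · intro C hC
    simp at hC
    rcases hC with rfl | hC | hC
    · exact Or.inl hX
    · exact h1 C hC
    · exact h1' C hC
  · simp; omega

/-! instances of the axioms -/

theorem av_all1 (B : Fm) (t : Tm) (h : Fm.all B ∈ axs) : Av (inst0 (epsT B) t) := by
  refine ⟨epsT (.all B), List.mem_map_of_mem h, ?_⟩
  intro s Γ Δ hp
  exact (Pr.allL t (epsT B) hp).mono (by omega)

theorem av_all2 (B : Fm) (t u : Tm) (h : Fm.all (.all B) ∈ axs) (B' : Fm)
    (hB : inst0 (epsT (.all B)) t = inst0 B' (.eps (.not B'))) : Av (inst0 B' u) := by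
  refine ⟨epsT (.all (.all B)), List.mem_map_of_mem h, ?_⟩
  intro s Γ Δ hp
  have h1 := Pr.allL u B' hp
  rw [← hB] at h1
  exact (Pr.allL t (epsT (.all B)) h1).mono (by omega)

theorem av_all3 (B : Fm) (t u v : Tm) (h : Fm.all (.all (.all B)) ∈ axs) (B' B'' : Fm)
    (hB : inst0 (epsT (.all (.all B))) t = inst0 B' (.eps (.not B')))
    (hB' : inst0 B' u = inst0 B'' (.eps (.not B''))) : Av (inst0 B'' v) := by
  refine ⟨epsT (.all (.all (.all B))), List.mem_map_of_mem h, ?_⟩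
  intro s Γ Δ hp
  have h0 := Pr.allL v B'' hp
  rw [← hB'] at h0
  have h1 := Pr.allL u B' h0
  rw [← hB] at h1
  exact (Pr.allL t (epsT (.all (.all B))) h1).mono (by omega)

theorem av_SP (x : Tm) : Av (.imp (Np x) (Np (sc x))) := by
  have := av_all1 (.imp (Np (.bvar 0)) (Np (sc (.bvar 0)))) x (by simp [axs, axSP])
  simpa [epsT, inst0, subF, subT, subTs] using this

theorem av_T (x : Tm) : Av (.imp (Np x) (Np x)) := by
  have := av_all1 (.imp (Np (.bvar 0)) (Np (.bvar 0))) x (by simp [axs, axT])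
  simpa [epsT, inst0, subF, subT, subTs] using this

theorem av_E1 (x : Tm) : Av (Ee (sc x) (gg x zr)) := by
  have := av_all1 (Ee (sc (.bvar 0)) (gg (.bvar 0) zr)) x (by simp [axs, axE1])
  simpa [epsT, inst0, subF, subT, subTs] using this

section
variable {a b y : Tm} (ha : clT 0 a) (hb : clT 0 b) (hy : clT 0 y)

theorem lc_lift {a : Tm} (ha : clT 0 a) (k : ℕ) : liftT k a = a := lift_clT 0 k (by omega) a ha
theorem lc_sub {a : Tm} (ha : clT 0 a) (k : ℕ) (u : Tm) : subT k u a = a :=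
  sub_clT 0 k u (by omega) a ha

theorem av_E2 {a : Tm} (b : Tm) (ha : clT 0 a) : Av (Ee (gg (gg a b) b) (gg a (sc b))) := by
  have := av_all2 (Ee (gg (gg (.bvar 1) (.bvar 0)) (.bvar 0)) (gg (.bvar 1) (sc (.bvar 0))))
    a b (by simp [axs, axE2])
    (Ee (gg (gg a (.bvar 0)) (.bvar 0)) (gg a (sc (.bvar 0))))
    (by simp [epsT, inst0, subF, subT, subTs, liftT, liftTs, liftF, lc_lift ha, lc_sub ha])
  simpa [epsT, inst0, subF, subT, subTs, lc_sub ha] using this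

theorem av_E4 {a : Tm} (b : Tm) (ha : clT 0 a) : Av (.imp (Ee a b) (.imp (Np a) (Np b))) := by
  have := av_all2 (.imp (Ee (.bvar 1) (.bvar 0)) (.imp (Np (.bvar 1)) (Np (.bvar 0))))
    a b (by simp [axs, axE4])
    (.imp (Ee a (.bvar 0)) (.imp (Np a) (Np (.bvar 0))))
    (by simp [epsT, inst0, subF, subT, subTs, liftT, liftTs, liftF, lc_lift ha, lc_sub ha])
  simpa [epsT, inst0, subF, subT, subTs, lc_sub ha] using this

theorem av_I1 {a : Tm} (b : Tm) (ha : clT 0 a) :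
    Av (.imp (Np (im a b)) (.imp (Np a) (Np b))) := by
  have := av_all2 (.imp (Np (im (.bvar 1) (.bvar 0))) (.imp (Np (.bvar 1)) (Np (.bvar 0))))
    a b (by simp [axs, axI1])
    (.imp (Np (im a (.bvar 0))) (.imp (Np a) (Np (.bvar 0))))
    (by simp [epsT, inst0, subF, subT, subTs, liftT, liftTs, liftF, lc_lift ha, lc_sub ha])
  simpa [epsT, inst0, subF, subT, subTs, lc_sub ha] using this

theorem av_I2 {a : Tm} (b : Tm) (ha : clT 0 a) :
    Av (.imp (.imp (Np a) (Np b)) (Np (im a b))) := by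
  have := av_all2 (.imp (.imp (Np (.bvar 1)) (Np (.bvar 0))) (Np (im (.bvar 1) (.bvar 0))))
    a b (by simp [axs, axI2])
    (.imp (.imp (Np a) (Np (.bvar 0))) (Np (im a (.bvar 0))))
    (by simp [epsT, inst0, subF, subT, subTs, liftT, liftTs, liftF, lc_lift ha, lc_sub ha])
  simpa [epsT, inst0, subF, subT, subTs, lc_sub ha] using this

theorem av_E3 {a b : Tm} (y : Tm) (ha : clT 0 a) (hb : clT 0 b) :
    Av (.imp (Ee a b) (Ee (gg y a) (gg y b))) := by
  have := av_all3 (.imp (Ee (.bvar 2) (.bvar 1))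
      (Ee (gg (.bvar 0) (.bvar 2)) (gg (.bvar 0) (.bvar 1))))
    a b y (by simp [axs, axE3])
    (inst0 (.imp (Ee a (.bvar 1)) (Ee (gg (.bvar 0) a) (gg (.bvar 0) (.bvar 1))))
      (.eps (.not (.imp (Ee a (.bvar 1)) (Ee (gg (.bvar 0) a) (gg (.bvar 0) (.bvar 1)))))))
    (.imp (Ee a b) (Ee (gg (.bvar 0) a) (gg (.bvar 0) b)))
    (by simp [epsT, inst0, subF, subT, subTs, liftT, liftTs, liftF, lc_lift ha, lc_sub ha])
    (by simp [epsT, inst0, subF, subT, subTs, liftT, liftTs, liftF, lc_lift ha, lc_sub ha,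
      lc_lift hb, lc_sub hb])
  simpa [epsT, inst0, subF, subT, subTs, lc_sub ha, lc_sub hb] using this
end

/-- instantiation of the universal quantifier hidden in the `(j+1)`-st class -/
theorem Der.inst {n j : ℕ} {P : Set Fm} {x y : Tm} (hx : clT 0 x) (hy : clT 0 y)
    (h : Der n P (Np (TT (j+1) x))) : Der (n+20) P (Np (im (TT j y) (TT j (gg y x)))) := by
  have h1 : Der 10 (insert (Np (TT (j+1) x)) P) (Np (im (TT j y) (TT j (gg y x)))) := by
    refine ⟨[Np (TT (j+1) x)], 2, by simp, ?_, by simp⟩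
    rw [← inst_WW_ee j x hx]
    refine Pr.allL y (WW j x) ?_
    rw [inst_WW j x y hx hy]
    exact Pr.ax _ _
  exact (Der.cutAv (av_T _) h h1).mono (by omega) (le_refl _)

theorem Der.elim {n m j : ℕ} {P : Set Fm} {x y : Tm} (hx : clT 0 x) (hy : clT 0 y)
    (h : Der n P (Np (TT (j+1) x))) (h' : Der m P (Np (TT j y))) :
    Der (n+m+30) P (Np (TT j (gg y x))) :=
  (Der.mp2 (av_I1 _ (cl_TT j 0 y hy)) (Der.inst hx hy h) h').mono (by omega) (le_refl _)

theorem Der.intro {n j : ℕ} {P : Set Fm} {x : Tm} (hx : clT 0 x)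
    (h : Der n (insert (Np (TT j (ee j x))) P) (Np (TT j (gg (ee j x) x)))) :
    Der (n+10) P (Np (TT (j+1) x)) := by
  rw [TT_succ]
  exact (Der.mp (av_I2 _ (cl_TT j 0 _ (cl_ee j 0 x hx))) (Der.impI h)).mono (by omega) (le_refl _)

theorem cl_gg {y x : Tm} (hy : clT 0 y) (hx : clT 0 x) : clT 0 (gg y x) := by
  simp [clT, clTs, hx, hy]

theorem cl_sc {x : Tm} (hx : clT 0 x) : clT 0 (sc x) := by simp [clT, clTs, hx]

theorem cl_zr : clT 0 zr := by simp [clT, clTs]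

/-- the classes respect provable equality -/
theorem Der.congr : ∀ (j : ℕ) {n m : ℕ} {P : Set Fm} {a b : Tm}, clT 0 a → clT 0 b →
    Der n P (Ee a b) → Der m P (Np (TT j a)) → Der (n+m+60*j+10) P (Np (TT j b))
  | 0, n, m, P, a, b, ha, _, h, h' =>
      (Der.mp2 (av_E4 b ha) h h').mono (by omega) (le_refl _)
  | j+1, n, m, P, a, b, ha, hb, h, h' => by
      have he := cl_ee j 0 b hb
      have h1 : Der n (insert (Np (TT j (ee j b))) P) (Ee a b) :=
        h.mono (le_refl _) (Set.subset_insert _ _)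
      have h2 : Der m (insert (Np (TT j (ee j b))) P) (Np (TT (j+1) a)) :=
        h'.mono (le_refl _) (Set.subset_insert _ _)
      have h3 := Der.elim ha he h2 (Der.hyp (Set.mem_insert _ _))
      have h4 := Der.mp (av_E3 (ee j b) ha hb) h1
      have h5 := Der.congr j (cl_gg he ha) (cl_gg he hb) h4 h3
      exact (Der.intro hb h5).mono (by omega) (le_refl _)

/-- the classes are closed under successor -/
theorem Der.succ (j : ℕ) {P : Set Fm} {x : Tm} (hx : clT 0 x) (h : Np (TT j x) ∈ P) :
    Der (60*j+200) P (Np (TT j (sc x))) := by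
  cases j with
  | zero => exact (Der.mp (av_SP x) (Der.hyp h)).mono (by omega) (le_refl _)
  | succ j =>
      have he := cl_ee j 0 (sc x) (cl_sc hx)
      have h2 : Der 4 (insert (Np (TT j (ee j (sc x)))) P) (Np (TT (j+1) x)) :=
        Der.hyp (Set.mem_insert_of_mem _ h)
      have h3 := Der.elim hx he h2 (Der.hyp (Set.mem_insert _ _))
      have h4 := Der.elim hx (cl_gg he hx) h2 h3
      have h5 := Der.congr j (cl_gg (cl_gg he hx) hx) (cl_gg he (cl_sc hx))
        (Der.av (av_E2 x he)) h4
      exact (Der.intro (cl_sc hx) h5).mono (by omega) (le_refl _)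

/-- zero belongs to all classes -/
theorem Der.zero (j : ℕ) {P : Set Fm} : Der (120*j+300) P (Np (TT j zr)) := by
  cases j with
  | zero => exact ⟨[Np zr], 1, by simp [G0, axs, axN0, epsT], Pr.ax _ _, by simp⟩
  | succ j =>
      have he := cl_ee j 0 zr cl_zr
      have h3 := Der.succ j (P := insert (Np (TT j (ee j zr))) P) he (Set.mem_insert _ _)
      have h5 := Der.congr j (cl_sc he) (cl_gg he cl_zr) (Der.av (av_E1 (ee j zr))) h3
      exact (Der.intro cl_zr h5).mono (by omega) (le_refl _)

theorem Der.tower : ∀ (k j : ℕ) {P : Set Fm},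
    Der ((k+1) * (120*(j+k)+400)) P (Np (TT j (gt k)))
  | 0, j, P => (Der.zero j).mono (by omega) (le_refl _)
  | k+1, j, P => by
      have h1 := Der.tower k (j+1) (P := P)
      have h2 := Der.elim (cl_gt k) cl_zr h1 (Der.zero j)
      refine h2.mono ?_ (le_refl _)
      have e : j + 1 + k = j + (k+1) := by omega
      rw [e, show (k+1+1) * (120*(j+(k+1))+400)
        = (k+1) * (120*(j+(k+1))+400) + (120*(j+(k+1))+400) by ring]
      omega

theorem upper (i : ℕ) : Pr ((i+1) * (120*i+400) + 10) G0 [Np (gt i)] := by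
  obtain ⟨Γ, s, h1, h2, h3⟩ := Der.tower i 0 (P := ∅)
  have h := Pr.finish h2 (L := G0) (fun A hA => by simpa using h1 A hA)
  refine h.mono ?_
  have : G0.length = 9 := rfl
  simp only [Nat.zero_add] at h3
  omega

/-! ## The lower bound -/

/-- the domain of the counter-models -/
inductive V : Type where
  | nat : ℕ → V
  | imp : V → V → V

def vs : V → V
  | .nat n => .nat (n+1)
  | .imp p q => .imp p q

def vg : V → V → V
  | .nat y, .nat x => .nat (y + 2^x)
  | .nat y, .imp _ _ => .nat y
  | .imp p q, _ => .imp p q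

def vN (M : ℕ) : V → Prop
  | .nat n => n < M
  | .imp p q => vN M p → vN M q

def vfn (f : ℕ) (l : List V) : V :=
  match f, l with
  | 1, [x] => vs x
  | 2, [y, x] => vg y x
  | 3, [p, q] => .imp p q
  | _, _ => .nat 0

def vpr (M : ℕ) (p : ℕ) (l : List V) : Prop :=
  match p, l with
  | 0, [x] => vN M x
  | 1, [x, y] => x = y
  | _, _ => True

def ins (k : ℕ) (v : V) (ρ : ℕ → V) : ℕ → V :=
  fun n => if n < k then ρ n else if n = k then v else ρ (n-1)

mutual
def evT (ρ : ℕ → V) : Tm → V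
  | .bvar n => ρ n
  | .fvar _ => .nat 0
  | .func f ts => vfn f (evTs ρ ts)
  | .eps _ => .nat 0
def evTs (ρ : ℕ → V) : Tms → List V
  | .nil => []
  | .cons t ts => evT ρ t :: evTs ρ ts
end

def evF (M : ℕ) (ρ : ℕ → V) : Fm → Prop
  | .atom p ts => vpr M p (evTs ρ ts)
  | .and A B => evF M ρ A ∧ evF M ρ B
  | .or A B => evF M ρ A ∨ evF M ρ B
  | .imp A B => evF M ρ A → evF M ρ B
  | .not A => ¬ evF M ρ A
  | .all A => ∀ v, evF M (ins 0 v ρ) A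
  | .ex A => ∃ v, evF M (ins 0 v ρ) A

mutual
theorem evT_lift (v : V) (ρ : ℕ → V) : ∀ t : Tm, evT (ins 0 v ρ) (liftT 0 t) = evT ρ t
  | .bvar n => by simp [liftT, evT, ins]
  | .fvar _ => by simp [liftT, evT]
  | .func _ ts => by simp [liftT, evT, evTs_lift v ρ ts]
  | .eps _ => by simp [liftT, evT]
theorem evTs_lift (v : V) (ρ : ℕ → V) : ∀ t : Tms, evTs (ins 0 v ρ) (liftTs 0 t) = evTs ρ t
  | .nil => by simp [liftTs, evTs]
  | .cons t ts => by simp [liftTs, evTs, evT_lift v ρ t, evTs_lift v ρ ts]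
end

mutual
theorem evT_sub (u : Tm) (k : ℕ) (ρ : ℕ → V) :
    ∀ t : Tm, evT ρ (subT k u t) = evT (ins k (evT ρ u) ρ) t
  | .bvar n => by
      simp only [subT, evT, ins]
      by_cases h1 : n = k
      · simp [h1]
      · by_cases h2 : n < k <;> simp [h1, h2, evT]
  | .fvar _ => by simp [subT, evT]
  | .func _ ts => by simp [subT, evT, evTs_sub u k ρ ts]
  | .eps _ => by simp [subT, evT]
theorem evTs_sub (u : Tm) (k : ℕ) (ρ : ℕ → V) :
    ∀ t : Tms, evTs ρ (subTs k u t) = evTs (ins k (evT ρ u) ρ) t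
  | .nil => by simp [subTs, evTs]
  | .cons t ts => by simp [subTs, evTs, evT_sub u k ρ t, evTs_sub u k ρ ts]
end

theorem ins_ins (k : ℕ) (v w : V) (ρ : ℕ → V) :
    ins (k+1) w (ins 0 v ρ) = ins 0 v (ins k w ρ) := by
  funext n
  cases n with
  | zero => simp [ins]
  | succ n =>
      simp only [ins]
      by_cases h1 : n < k
      · simp [h1]
      · by_cases h2 : n = k
        · simp [h2]
        · have : n ≠ 0 := by omega
          simp [h1, h2, this]

theorem evF_sub (M : ℕ) : ∀ (A : Fm) (u : Tm) (k : ℕ) (ρ : ℕ → V),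
    evF M ρ (subF k u A) ↔ evF M (ins k (evT ρ u) ρ) A
  | .atom _ ts, u, k, ρ => by simp [subF, evF, evTs_sub]
  | .and A B, u, k, ρ => by simp [subF, evF, evF_sub M A, evF_sub M B]
  | .or A B, u, k, ρ => by simp [subF, evF, evF_sub M A, evF_sub M B]
  | .imp A B, u, k, ρ => by simp [subF, evF, evF_sub M A, evF_sub M B]
  | .not A, u, k, ρ => by simp [subF, evF, evF_sub M A]
  | .all A, u, k, ρ => by simp [subF, evF, evF_sub M A, evT_lift, ins_ins]
  | .ex A, u, k, ρ => by simp [subF, evF, evF_sub M A, evT_lift, ins_ins]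

theorem weak_sub : ∀ (A : Fm) (k : ℕ) (u : Tm),
    posW (subF k u A) = posW A ∧ negW (subF k u A) = negW A
  | .atom _ _, k, u => by simp [subF, posW, negW]
  | .and A B, k, u => by simp [subF, posW, negW, weak_sub A, weak_sub B]
  | .or A B, k, u => by simp [subF, posW, negW, weak_sub A, weak_sub B]
  | .imp A B, k, u => by simp [subF, posW, negW, weak_sub A, weak_sub B]
  | .not A, k, u => by simp [subF, posW, negW, weak_sub A]
  | .all A, k, u => by simp [subF, posW, negW, weak_sub A]
  | .ex A, k, u => by simp [subF, posW, negW, weak_sub A]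

def ρ0 : ℕ → V := fun _ => .nat 0

/-- the values of the terms used in left universal inferences -/
def vals : ∀ {Γ Δ}, Deriv Γ Δ → List V
  | _, _, .ax _ => []
  | _, _, .andL _ _ _ _ d => vals d
  | _, _, .andR _ _ _ _ _ _ d e => vals d ++ vals e
  | _, _, .orL _ _ _ _ _ _ d e => vals d ++ vals e
  | _, _, .orR _ _ _ _ d => vals d
  | _, _, .impL _ _ _ _ _ _ d e => vals d ++ vals e
  | _, _, .impR _ _ _ _ d => vals d
  | _, _, .notL _ _ _ d => vals d
  | _, _, .notR _ _ _ d => vals d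
  | _, _, .wL _ _ _ d => vals d
  | _, _, .wR _ _ _ d => vals d
  | _, _, .cL _ _ _ d => vals d
  | _, _, .cR _ _ _ d => vals d
  | _, _, .cut _ _ _ _ _ d e => vals d ++ vals e
  | _, _, .allL t _ _ _ d => evT ρ0 t :: vals d
  | _, _, .allR _ _ _ _ d => vals d
  | _, _, .exL _ _ _ _ d => vals d
  | _, _, .exR _ _ _ _ d => vals d
  | _, _, .permL _ _ _ _ d => vals d
  | _, _, .permR _ _ _ _ d => vals d

theorem vals_length {Γ Δ : List Fm} (d : Deriv Γ Δ) : (vals d).length ≤ d.size := by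
  induction d <;> simp only [vals, Deriv.size, List.length_append, List.length_cons,
    List.length_nil] <;> omega

/-- `A` is true in the model, or it is the special axiom -/
def ok (M : ℕ) (A : Fm) : Prop := A = axSP ∨ evF M ρ0 A

theorem ok_iff {M : ℕ} {A : Fm} (h : ∀ B, A ≠ Fm.all B) : ok M A ↔ evF M ρ0 A := by
  constructor
  · rintro (h1 | h1)
    · exact absurd h1 (h _)
    · exact h1
  · exact Or.inr

theorem sound (M : ℕ) {Γ Δ : List Fm} (d : Deriv Γ Δ) : d.cutFms = [] →
    (∀ A ∈ Γ, negW A = true) → (∀ A ∈ Δ, posW A = true) →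
    (∀ n, V.nat n ∈ vals d → n + 1 ≠ M) →
    (∀ A ∈ Γ, ok M A) → ∃ A ∈ Δ, evF M ρ0 A := by
  induction d with
  | ax A =>
      intro _ hn hp _ ho
      refine ⟨A, by simp, ?_⟩
      rcases ho A (by simp) with h | h
      · have := hp A (by simp)
        simp [h, axSP, posW] at this
      · exact h
  | andL A B Γ Δ d ih =>
      intro hc hn hp hv ho
      simp only [List.forall_mem_cons, negW, Bool.and_eq_true, vals, Deriv.cutFms] at *
      rw [ok_iff (by simp)] at ho
      exact ih hc ⟨hn.1.1, hn.1.2, hn.2⟩ hp hv ⟨Or.inr ho.1.1, Or.inr ho.1.2, ho.2⟩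
  | andR A B Γ₁ Δ₁ Γ₂ Δ₂ d e ih ih' =>
      intro hc hn hp hv ho
      simp only [List.forall_mem_cons, List.forall_mem_append, posW, Bool.and_eq_true, vals,
        Deriv.cutFms, List.append_eq_nil_iff, List.exists_mem_cons_iff] at *
      simp only [List.mem_append] at hv ⊢
      have h1 := ih hc.1 hn.1 ⟨hp.1.1, hp.2.1⟩ (fun n h => hv n (Or.inl h)) ho.1
      have h2 := ih' hc.2 hn.2 ⟨hp.1.2, hp.2.2⟩ (fun n h => hv n (Or.inr h)) ho.2
      rcases h1 with h1 | ⟨C, hC, h1⟩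
      · rcases h2 with h2 | ⟨C, hC, h2⟩
        · exact Or.inl ⟨h1, h2⟩
        · exact Or.inr ⟨C, Or.inr hC, h2⟩
      · exact Or.inr ⟨C, Or.inl hC, h1⟩
  | orL A B Γ₁ Δ₁ Γ₂ Δ₂ d e ih ih' =>
      intro hc hn hp hv ho
      simp only [List.forall_mem_cons, List.forall_mem_append, negW, Bool.and_eq_true, vals,
        Deriv.cutFms, List.append_eq_nil_iff] at *
      simp only [List.mem_append] at hv ⊢
      rw [ok_iff (by simp)] at ho
      rcases ho.1 with h | h
      · obtain ⟨C, hC, h1⟩ := ih hc.1 ⟨hn.1.1, hn.2.1⟩ hp.1 (fun n h => hv n (Or.inl h))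
          ⟨Or.inr h, ho.2.1⟩
        exact ⟨C, Or.inl hC, h1⟩
      · obtain ⟨C, hC, h1⟩ := ih' hc.2 ⟨hn.1.2, hn.2.2⟩ hp.2 (fun n h => hv n (Or.inr h))
          ⟨Or.inr h, ho.2.2⟩
        exact ⟨C, Or.inr hC, h1⟩
  | orR A B Γ Δ d ih =>
      intro hc hn hp hv ho
      simp only [List.forall_mem_cons, posW, Bool.and_eq_true, vals, Deriv.cutFms,
        List.exists_mem_cons_iff] at *
      rcases ih hc hn ⟨hp.1.1, hp.1.2, hp.2⟩ hv ho with h | h | h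
      · exact Or.inl (Or.inl h)
      · exact Or.inl (Or.inr h)
      · exact Or.inr h
  | impL A B Γ₁ Δ₁ Γ₂ Δ₂ d e ih ih' =>
      intro hc hn hp hv ho
      simp only [List.forall_mem_cons, List.forall_mem_append, negW, Bool.and_eq_true, vals,
        Deriv.cutFms, List.append_eq_nil_iff, List.exists_mem_cons_iff] at *
      simp only [List.mem_append] at hv ⊢
      rw [ok_iff (by simp)] at ho
      rcases ih hc.1 hn.2.1 ⟨hn.1.1, hp.1⟩ (fun n h => hv n (Or.inl h)) ho.2.1 with
        h | ⟨C, hC, h⟩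
      · obtain ⟨C, hC, h1⟩ := ih' hc.2 ⟨hn.1.2, hn.2.2⟩ hp.2 (fun n h => hv n (Or.inr h))
          ⟨Or.inr (ho.1 h), ho.2.2⟩
        exact ⟨C, Or.inr hC, h1⟩
      · exact ⟨C, Or.inl hC, h⟩
  | impR A B Γ Δ d ih =>
      intro hc hn hp hv ho
      simp only [List.forall_mem_cons, posW, Bool.and_eq_true, vals, Deriv.cutFms,
        List.exists_mem_cons_iff] at *
      by_cases hA : evF M ρ0 A
      · rcases ih hc ⟨hp.1.1, hn⟩ ⟨hp.1.2, hp.2⟩ hv ⟨Or.inr hA, ho⟩ with h | h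
        · exact Or.inl (fun _ => h)
        · exact Or.inr h
      · exact Or.inl (fun h => absurd h hA)
  | notL A Γ Δ d ih =>
      intro hc hn hp hv ho
      simp only [List.forall_mem_cons, negW, vals, Deriv.cutFms,
        List.exists_mem_cons_iff] at *
      rw [ok_iff (by simp)] at ho
      rcases ih hc hn.2 ⟨hn.1, hp⟩ hv ho.2 with h | h
      · exact absurd h ho.1
      · exact h
  | notR A Γ Δ d ih =>
      intro hc hn hp hv ho
      simp only [List.forall_mem_cons, posW, vals, Deriv.cutFms,
        List.exists_mem_cons_iff] at *
      by_cases hA : evF M ρ0 A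
      · exact Or.inr (ih hc ⟨hp.1, hn⟩ hp.2 hv ⟨Or.inr hA, ho⟩)
      · exact Or.inl hA
  | wL A Γ Δ d ih =>
      intro hc hn hp hv ho
      simp only [List.forall_mem_cons, vals, Deriv.cutFms] at *
      exact ih hc hn.2 hp hv ho.2
  | wR A Γ Δ d ih =>
      intro hc hn hp hv ho
      simp only [List.forall_mem_cons, vals, Deriv.cutFms, List.exists_mem_cons_iff] at *
      exact Or.inr (ih hc hn hp.2 hv ho)
  | cL A Γ Δ d ih =>
      intro hc hn hp hv ho
      simp only [List.forall_mem_cons, vals, Deriv.cutFms] at *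
      exact ih hc ⟨hn.1, hn⟩ hp hv ⟨ho.1, ho⟩
  | cR A Γ Δ d ih =>
      intro hc hn hp hv ho
      simp only [List.forall_mem_cons, vals, Deriv.cutFms, List.exists_mem_cons_iff] at *
      rcases ih hc hn ⟨hp.1, hp⟩ hv ho with h | h
      · exact Or.inl h
      · exact h
  | cut A Γ₁ Δ₁ Γ₂ Δ₂ d e ih ih' =>
      intro hc
      simp [Deriv.cutFms] at hc
  | allL t A Γ Δ d ih =>
      intro hc hn hp hv ho
      simp only [List.forall_mem_cons, negW, vals, Deriv.cutFms] at *
      simp only [List.mem_cons] at hv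
      have hw : negW (inst0 A t) = true := by rw [inst0, (weak_sub A 0 t).2]; exact hn.1
      refine ih hc ⟨hw, hn.2⟩ hp (fun n h => hv n (Or.inr h)) ⟨Or.inr ?_, ho.2⟩
      rcases ho.1 with h | h
      · simp only [axSP, Fm.all.injEq] at h
        subst h
        have hh : ∀ v, (∀ n, V.nat n = v → n + 1 ≠ M) → vN M v → vN M (vs v) := by
          intro v hv' h1
          cases v with
          | nat n =>
              have := hv' n rfl
              simp only [vN, vs] at *
              omega
          | imp p q => exact h1
        simpa [inst0, subF, subTs, subT, evF, evTs, evT, vpr, vfn] using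
          hh (evT ρ0 t) (fun n h => hv n (Or.inl h))
      · rw [inst0, evF_sub]
        exact h _
  | allR a A Γ Δ d ih =>
      intro hc hn hp
      have := hp (.all A) (by simp)
      simp [posW] at this
  | exL a A Γ Δ d ih =>
      intro hc hn hp
      have := hn (.ex A) (by simp)
      simp [negW] at this
  | exR t A Γ Δ d ih =>
      intro hc hn hp hv ho
      simp only [List.forall_mem_cons, posW, vals, Deriv.cutFms, List.exists_mem_cons_iff] at *
      have hw : posW (inst0 A t) = true := by rw [inst0, (weak_sub A 0 t).1]; exact hp.1
      rcases ih hc hn ⟨hw, hp.2⟩ hv ho with h | h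
      · rw [inst0, evF_sub] at h
        exact Or.inl ⟨_, h⟩
      · exact Or.inr h
  | permL Γ Γ' Δ hP d ih =>
      intro hc hn hp hv ho
      exact ih hc (fun A hA => hn A (hP.mem_iff.mp hA)) hp hv
        (fun A hA => ho A (hP.mem_iff.mp hA))
  | permR Γ Δ Δ' hP d ih =>
      intro hc hn hp hv ho
      obtain ⟨C, hC, h⟩ := ih hc hn (fun A hA => hp A (hP.mem_iff.mp hA)) hv ho
      exact ⟨C, hP.mem_iff.mp hC, h⟩

theorem ev_gt : ∀ i, evT ρ0 (gt i) = .nat (iterExp i 0)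
  | 0 => by simp [gt, evT, evTs, vfn, iterExp]
  | i+1 => by simp [gt, evT, evTs, vfn, ev_gt i, vg, iterExp]

theorem vg_zero (y : V) : vg y (.nat 0) = vs y := by cases y <;> simp [vg, vs]

theorem vg_succ (y x : V) : vg (vg y x) x = vg y (vs x) := by
  cases y <;> cases x <;> simp [vg, vs]
  ring

theorem weak_axs : ∀ A ∈ axs, negW A = true := by
  simp [axs, axN0, axSP, axT, axE1, axE2, axE3, axE4, axI1, axI2, negW, posW]

theorem fo_axs : ∀ A ∈ axs, isFO A = true := by
  simp [axs, axN0, axSP, axT, axE1, axE2, axE3, axE4, axI1, axI2, isFO, noEpsF, noEpsT, noEpsTs]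

theorem noEps_gt : ∀ i, noEpsT (gt i) = true
  | 0 => by simp [gt, noEpsT, noEpsTs]
  | i+1 => by simp [gt, noEpsT, noEpsTs, noEps_gt i]

theorem ok_axs (M : ℕ) (hM : 0 < M) : ∀ A ∈ axs, ok M A := by
  simp only [axs, List.forall_mem_cons, List.not_mem_nil, false_imp_iff, implies_true, and_true]
  refine ⟨Or.inr ?_, Or.inl rfl, Or.inr ?_, Or.inr ?_, Or.inr ?_, Or.inr ?_, Or.inr ?_,
    Or.inr ?_, Or.inr ?_⟩
  · simpa [axN0, evF, evTs, evT, vpr, vfn, vN] using hM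
  · simp [axT, evF]
  · simp [axE1, evF, evTs, evT, vpr, vfn, vg_zero]
  · simp [axE2, evF, evTs, evT, vpr, vfn, vg_succ]
  · simp [axE3, evF, evTs, evT, vpr, vfn, ins]
    rintro v w - rfl
    rfl
  · simp [axE4, evF, evTs, evT, vpr, vfn, ins]
  · simp [axI1, evF, evTs, evT, vpr, vfn, ins, vN]
  · simp [axI2, evF, evTs, evT, vpr, vfn, ins, vN]

theorem lower (i : ℕ) (d : Deriv axs [Np (gt i)]) (hc : d.cutFms = []) :
    iterExp i 0 ≤ d.size := by
  classical
  have key : ∀ n < iterExp i 0, V.nat n ∈ vals d := by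
    intro n hn
    by_contra hcon
    obtain ⟨C, hC, h⟩ := sound (n+1) d hc weak_axs (by simp [posW])
      (fun m hm he => hcon (by have : m = n := by omega
                               exact this ▸ hm))
      (ok_axs (n+1) (by omega))
    simp only [List.mem_singleton] at hC
    subst hC
    simp [evF, evTs, vpr, ev_gt, vN] at h
    omega
  have hsub : (Finset.range (iterExp i 0)).image V.nat ⊆ (vals d).toFinset := by
    intro v hv
    simp only [Finset.mem_image, Finset.mem_range] at hv
    obtain ⟨n, hn, rfl⟩ := hv
    simpa using key n hn
  have h1 := Finset.card_le_card hsub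
  rw [Finset.card_image_of_injective _ (fun a b h => by simpa using h), Finset.card_range] at h1
  exact h1.trans ((List.toFinset_card_le _).trans (vals_length d))

theorem iterExp_add (k m x : ℕ) : iterExp (k + m) x = iterExp k (iterExp m x) := by
  induction k with
  | zero => simp [iterExp]
  | succ k ih => rw [show k + 1 + m = (k + m) + 1 by omega]; simp [iterExp, ih]

theorem iterExp_lt (k : ℕ) {x y : ℕ} (h : x < y) : iterExp k x < iterExp k y := by
  induction k with
  | zero => simpa [iterExp] using h
  | succ k ih => simpa [iterExp] using Nat.pow_lt_pow_right (by norm_num) ih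

theorem iterExp_big (m : ℕ) : 2 * m + 5 ≤ iterExp (m + 5) 0 := by
  induction m with
  | zero => norm_num [iterExp]
  | succ m ih =>
      rw [show m + 1 + 5 = (m + 5) + 1 by omega]
      show 2 * (m + 1) + 5 ≤ 2 ^ iterExp (m + 5) 0
      have h1 : 2 ^ (2 * m + 5) ≤ 2 ^ iterExp (m + 5) 0 := Nat.pow_le_pow_right (by norm_num) ih
      have h2 : 2 * m + 5 < 2 ^ (2 * m + 5) := Nat.lt_two_pow_self
      have h3 : 2 * m + 4 < 2 ^ (2 * m + 4) := Nat.lt_two_pow_self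
      have h4 : 2 ^ (2 * m + 5) = 2 * 2 ^ (2 * m + 4) := by ring
      omega

theorem no_elementary (f : ℕ → ℕ) (hf : IsElementary f) : ∃ i, f i < iterExp i 0 := by
  obtain ⟨k, hk⟩ := hf
  refine ⟨k + (k + 1 + 5), (hk _).trans_lt ?_⟩
  rw [iterExp_add]
  apply iterExp_lt
  have := iterExp_big (k+1)
  omega

theorem sz_gt : ∀ i, szT (gt i) = 2 * i + 1
  | 0 => by simp [gt, szT, szTs]
  | i+1 => by simp [gt, szT, szTs, sz_gt i]; ring

/-- There is a sequence of cut-free Lε-proofs of end-sequents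
`S i` such that: (1) the size of `S i` is polynomial in `i`; (2) each `S i` is
the epsilon translation of a first-order sequent `S' i` with weak quantifiers
only; (3) the size of these cut-free Lε-proofs is polynomially bounded in `i`;
(4) no elementary function of `i` bounds the size of the smallest cut-free
LK⁺-proofs, nor of the smallest cut-free LK⁺⁺-proofs, of `S' i`.  Hence
cut-free Lε-proofs give a non-elementary speed-up even over cut-free LK⁺- and
LK⁺⁺-proofs. -/
theorem leps_speedup_over_lkplus :
    ∃ S' : ℕ → List Fm × List Fm,
      -- (2) S_i is the epsilon translation of the first-order sequent S'_i,
      -- which contains weak quantifiers only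
      (∀ i, FOSeq (S' i).1 (S' i).2 ∧ WeakSeq (S' i).1 (S' i).2) ∧
      -- (1) the size of S_i = [S'_i]^ε is polynomial in i
      (∃ p : Polynomial ℕ,
        ∀ i, seqSize ((S' i).1.map epsT) ((S' i).2.map epsT) ≤ p.eval i) ∧
      -- (3) cut-free Lε-proofs of S_i of polynomial size
      (∃ q : Polynomial ℕ,
        ∀ i, ∃ e : EDeriv ((S' i).1.map epsT) ((S' i).2.map epsT),
          e.cutFms = [] ∧ e.size ≤ q.eval i) ∧
      -- (4) no elementary bound on cut-free LK⁺-proofs of S'_i ...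
      (∀ f : ℕ → ℕ, IsElementary f →
        ¬ ∀ i, ∃ d : Deriv (S' i).1 (S' i).2,
            SuitP d ∧ d.cutFms = [] ∧ d.size ≤ f i) ∧
      -- ... nor on cut-free LK⁺⁺-proofs of S'_i
      (∀ f : ℕ → ℕ, IsElementary f →
        ¬ ∀ i, ∃ d : Deriv (S' i).1 (S' i).2,
            SuitPP d ∧ d.cutFms = [] ∧ d.size ≤ f i) := by
  refine ⟨fun i => (axs, [Np (gt i)]), ?_, ?_, ?_, ?_, ?_⟩
  · intro i
    refine ⟨⟨fo_axs, ?_⟩, ⟨weak_axs, ?_⟩⟩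
    · simp [isFO, noEpsF, noEpsTs, noEps_gt]
    · simp [posW]
  · refine ⟨Polynomial.C (seqSize G0 [] + 2) + Polynomial.C 2 * Polynomial.X, fun i => ?_⟩
    have hfold : ∀ (L : List Fm) (c : ℕ), L.foldr (fun A n => szF A + n) c
        = L.foldr (fun A n => szF A + n) 0 + c := by
      intro L c
      induction L with
      | nil => simp
      | cons A L ih => simp only [List.foldr_cons]; omega
    have h1 : seqSize G0 [Np (gt i)] = seqSize G0 [] + (2 * i + 2) := by
      simp only [seqSize, List.foldr_append, List.foldr_cons, List.foldr_nil]
      rw [hfold]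
      simp [szF, szTs, sz_gt]; ring
    have h2 : seqSize (axs.map epsT) ([Np (gt i)].map epsT) = seqSize G0 [Np (gt i)] := by
      simp [G0, epsT]
    simp only [h2, h1, Polynomial.eval_add, Polynomial.eval_mul, Polynomial.eval_C,
      Polynomial.eval_X]
    omega
  · refine ⟨(Polynomial.X + Polynomial.C 1) * (Polynomial.C 120 * Polynomial.X + Polynomial.C 400)
      + Polynomial.C 10, fun i => ?_⟩
    obtain ⟨e, h1, h2⟩ := upper i
    refine ⟨e, h1, h2.trans ?_⟩
    simp only [Polynomial.eval_add, Polynomial.eval_mul, Polynomial.eval_C, Polynomial.eval_X]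
    exact le_refl _
  · intro f hf h
    obtain ⟨i, hi⟩ := no_elementary f hf
    obtain ⟨d, -, hc, hs⟩ := h i
    exact absurd (lower i d hc) (by omega)
  · intro f hf h
    obtain ⟨i, hi⟩ := no_elementary f hf
    obtain ⟨d, -, hc, hs⟩ := h i
    exact absurd (lower i d hc) (by omega)

end EpsCalc
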